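/- Let D be a division ring, let A be an ultramatricial D-ring, and let N be an extremal pseudo-rank function on A such that the completion Q of A with respect to N is a continuous factor. Then Q is isomorphic to M_D as a D-ring. -/

import Mathlib

open scoped TensorProduct Kronecker

noncomputable section

namespace AraClaramunt

/-! ### Pseudo-rank functions and rank metric notions -/

/-- A pseudo-rank function on a unital ring. -/
structure IsPseudoRankFunction {R : Type*} [Ring R] (N : R → ℝ) : Prop where
  nonneg : ∀ x : R, 0 ≤ N x
  le_one : ∀ x : R, N x ≤ 1
  map_one : N 1 = 1
  subadditive : ∀ a b : R, N (a + b) ≤ N a + N b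
  mul_le_left : ∀ a b : R, N (a * b) ≤ N a
  mul_le_right : ∀ a b : R, N (a * b) ≤ N b
  add_of_orthogonal : ∀ e f : R, IsIdempotentElem e → IsIdempotentElem f →
    e * f = 0 → f * e = 0 → N (e + f) = N e + N f

/-- A rank function is a faithful pseudo-rank function. -/
def IsRankFunction {R : Type*} [Ring R] (N : R → ℝ) : Prop :=
  IsPseudoRankFunction N ∧ ∀ x : R, N x = 0 → x = 0

/-- Cauchy sequence for the pseudo-metric `d(x,y) = N (x - y)`. -/
def RankCauchy {R : Type*} [Ring R] (N : R → ℝ) (u : ℕ → R) : Prop :=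
  ∀ ε : ℝ, 0 < ε → ∃ n₀ : ℕ, ∀ m n : ℕ, n₀ ≤ m → n₀ ≤ n → N (u m - u n) < ε

/-- Convergence for the pseudo-metric `d(x,y) = N (x - y)`. -/
def RankTendsto {R : Type*} [Ring R] (N : R → ℝ) (u : ℕ → R) (x : R) : Prop :=
  ∀ ε : ℝ, 0 < ε → ∃ n₀ : ℕ, ∀ n : ℕ, n₀ ≤ n → N (u n - x) < ε

/-- Completeness with respect to the pseudo-metric `d(x,y) = N (x - y)`. -/
def RankComplete {R : Type*} [Ring R] (N : R → ℝ) : Prop :=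
  ∀ u : ℕ → R, RankCauchy N u → ∃ x : R, RankTendsto N u x

/-- Density of a subset with respect to the pseudo-metric `d(x,y) = N (x - y)`. -/
def RankDense {R : Type*} [Ring R] (N : R → ℝ) (S : Set R) : Prop :=
  ∀ x : R, ∀ ε : ℝ, 0 < ε → ∃ y ∈ S, N (x - y) < ε

/-- von Neumann regularity. -/
def VNRegular (R : Type*) [Ring R] : Prop :=
  ∀ x : R, ∃ y : R, x = x * y * x

/-- A continuous factor: a simple, von Neumann regular, right and left self-injective ring
admitting a rank function whose image is all of `[0,1]`. -/
def IsContinuousFactor (R : Type*) [Ring R] : Prop :=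
  IsSimpleRing R ∧ VNRegular R ∧ Module.Injective R R ∧ Module.Injective Rᵐᵒᵖ Rᵐᵒᵖ ∧
    ∃ N : R → ℝ, IsRankFunction N ∧ Set.range N = Set.Icc (0 : ℝ) 1

/-- An extremal pseudo-rank function: an extreme point of the convex set of all
pseudo-rank functions. -/
def IsExtremalPseudoRankFunction {R : Type*} [Ring R] (N : R → ℝ) : Prop :=
  N ∈ Set.extremePoints ℝ {S : R → ℝ | IsPseudoRankFunction S}

/-! ### Matricial and ultramatricial algebras -/

/-- A matricial `K`-algebra. -/
def IsMatricialAlgebra (K : Type*) [Field K] (A : Type*) [Ring A] [Algebra K A] : Prop :=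
  ∃ (k : ℕ) (n : Fin (k + 1) → ℕ), (∀ i, 0 < n i) ∧
    Nonempty (A ≃ₐ[K] ((i : Fin (k + 1)) → Matrix (Fin (n i)) (Fin (n i)) K))

/-- An ultramatricial `K`-algebra: the increasing union of matricial subalgebras. -/
def IsUltramatricialAlgebra (K : Type*) [Field K] (B : Type*) [Ring B] [Algebra K B] : Prop :=
  ∃ C : ℕ → Subalgebra K B, (∀ n, C n ≤ C (n + 1)) ∧
    (∀ n, IsMatricialAlgebra K (C n)) ∧ (∀ b : B, ∃ n, b ∈ C n)

/-- `Q`, with rank function `N`, is the rank-metric completion of a direct limit of the matrix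
algebras `M_{p n}(K)`: it is complete and carries a dense increasing tower of unital subalgebras
isomorphic to `M_{p n}(K)`. -/
def IsMatrixTowerCompletion (K : Type*) [Field K] (Q : Type*) [Ring Q] [Algebra K Q]
    (N : Q → ℝ) (p : ℕ → ℕ) : Prop :=
  IsRankFunction N ∧ RankComplete N ∧
    ∃ A : ℕ → Subalgebra K Q, (∀ n, A n ≤ A (n + 1)) ∧
      (∀ n, Nonempty ((A n) ≃ₐ[K] Matrix (Fin (p n)) (Fin (p n)) K)) ∧
      RankDense N (⋃ n, (A n : Set Q))

/-- `Q` is (a copy of) von Neumann's continuous factor `M_K`, the completion of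
`lim_n M_{2^n}(K)` with respect to its unique rank function. -/
def IsMK (K : Type*) [Field K] (Q : Type*) [Ring Q] [Algebra K Q] (N : Q → ℝ) : Prop :=
  IsMatrixTowerCompletion K Q N (fun n => 2 ^ n)

/-- The canonical block-diagonal unital embedding `M_a(K) → M_b(K)`, `z ↦ z ⊗ 1_g`,
where `b = a * g`. -/
def blockEmbedFun (K : Type*) [Semiring K] {a : ℕ} (g b : ℕ) (h : a * g = b)
    (z : Matrix (Fin a) (Fin a) K) : Matrix (Fin b) (Fin b) K :=
  Matrix.reindex (finProdFinEquiv.trans (finCongr h)) (finProdFinEquiv.trans (finCongr h))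
    (z ⊗ₖ (1 : Matrix (Fin g) (Fin g) K))

end AraClaramunt
namespace AraClaramunt

/-- A matricial `D`-ring: a `D`-ring isomorphic, compatibly with the structure maps, to a finite
product of matrix rings over `D` (with the canonical diagonal `D`-ring structure). -/
def IsMatricialDRing (D : Type) [DivisionRing D] (A : Type) [Ring A] (ι : D →+* A) : Prop :=
  ∃ (k : ℕ) (n : Fin (k + 1) → ℕ), (∀ i, 0 < n i) ∧
    ∃ e : A ≃+* ((i : Fin (k + 1)) → Matrix (Fin (n i)) (Fin (n i)) D),
      ∀ d : D, e (ι d) = fun i => d • (1 : Matrix (Fin (n i)) (Fin (n i)) D)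

/-- An ultramatricial `D`-ring: an increasing union of matricial `D`-subrings. -/
def IsUltramatricialDRing (D : Type) [DivisionRing D] (A : Type) [Ring A]
    (ι : D →+* A) : Prop :=
  ∃ C : ℕ → Subring A, (∀ n, C n ≤ C (n + 1)) ∧ (∀ a : A, ∃ n, a ∈ C n) ∧
    ∀ n, ∃ h : ∀ d : D, ι d ∈ C n,
      IsMatricialDRing D (C n) (RingHom.codRestrict ι (C n) h)

/-- `Q`, as a `D`-ring via `ι` and with rank function `N`, is (a copy of) `M_D`, the completion
of `lim_n M_{2^n}(D)` with respect to its unique rank function. -/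
def IsMD (D : Type) [DivisionRing D] (Q : Type) [Ring Q] (ι : D →+* Q)
    (N : Q → ℝ) : Prop :=
  IsRankFunction N ∧ RankComplete N ∧
    ∃ C : ℕ → Subring Q, (∀ n, C n ≤ C (n + 1)) ∧ RankDense N (⋃ n, (C n : Set Q)) ∧
      ∀ n, ∃ h : ∀ d : D, ι d ∈ C n,
        ∃ e : (C n) ≃+* Matrix (Fin (2 ^ n)) (Fin (2 ^ n)) D,
          ∀ d : D, e (RingHom.codRestrict ι (C n) h d)
            = d • (1 : Matrix (Fin (2 ^ n)) (Fin (2 ^ n)) D)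

/-!
Extremality makes the central idempotents `z` of late matricial stages asymptotically independent
of any fixed element: `N (z * a)` is close to `N z * N a`, since otherwise suitable limits of
`N (z * ·)` and `N ((1 - z) * ·)` would decompose `N`. Hence the normalized ranks of a fixed
idempotent in the blocks of a late stage concentrate at its rank, and, because the completion has
elements of arbitrarily small positive rank, the small blocks carry negligible weight. All
multiplicities can then be divided almost exactly: up to small rank, a late stage contains `2 ^ l`
times finer approximate matrix units refining the given ones of size `2 ^ k` and approximating a
prescribed earlier stage. Summable errors let the coarsened units converge in the completion to
exact matrix units of size `2 ^ κ` for every `κ`, and their `D`-spans form an increasing dense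
sequence of copies of `M_{2^κ}(D)`.
-/

/-! ### Pseudo-rank functions -/

namespace IsPseudoRankFunction

variable {R : Type*} [Ring R] {N : R → ℝ}

protected lemma map_zero (hN : IsPseudoRankFunction N) : N 0 = 0 := by
  simpa using hN.add_of_orthogonal 0 0 .zero .zero (mul_zero 0) (mul_zero 0)

protected lemma map_neg (hN : IsPseudoRankFunction N) (x : R) : N (-x) = N x :=
  le_antisymm (by simpa using hN.mul_le_right (-1) x) (by simpa using hN.mul_le_right (-1) (-x))

/-- A pseudo-rank function as a seminorm on the additive group; its pseudo-metric is the rank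
pseudo-metric `d(x, y) = N (x - y)`. -/
def toAddGroupSeminorm (hN : IsPseudoRankFunction N) : AddGroupSeminorm R where
  toFun := N
  map_zero' := hN.map_zero
  add_le' := hN.subadditive
  neg' := hN.map_neg

lemma sub_le (hN : IsPseudoRankFunction N) (x y : R) : N (x - y) ≤ N x + N y :=
  map_sub_le_add hN.toAddGroupSeminorm x y

lemma sub_le_sub_add_sub (hN : IsPseudoRankFunction N) (x y z : R) :
    N (x - z) ≤ N (x - y) + N (y - z) :=
  le_map_sub_add_map_sub hN.toAddGroupSeminorm x y z

lemma abs_sub_le (hN : IsPseudoRankFunction N) (x y : R) : |N x - N y| ≤ N (x - y) :=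
  abs_sub_map_le_sub hN.toAddGroupSeminorm x y

lemma sum_le (hN : IsPseudoRankFunction N) {I : Type*} (s : Finset I) (f : I → R) :
    N (∑ i ∈ s, f i) ≤ ∑ i ∈ s, N (f i) :=
  Finset.le_sum_of_subadditive N hN.map_zero.le hN.subadditive s f

lemma mul_mul_le (hN : IsPseudoRankFunction N) (u x v : R) : N (u * x * v) ≤ N x :=
  (hN.mul_le_left _ _).trans (hN.mul_le_right _ _)

lemma mul_eq_of_mul_eq (hN : IsPseudoRankFunction N) {x y g : R} (hyx : y * x = g)
    (hxg : x * g = x) : N (x * y) = N g := by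
  apply le_antisymm
  · rw [← hxg]
    exact hN.mul_mul_le x g y
  · have hg : g = y * (x * y) * x := by rw [mul_assoc, mul_assoc, hyx, hxg, hyx]
    exact hg ▸ hN.mul_mul_le y (x * y) x

lemma sub_eq_of_mul_eq (hN : IsPseudoRankFunction N) {e f : R} (he : IsIdempotentElem e)
    (hf : IsIdempotentElem f) (hef : e * f = f) (hfe : f * e = f) : N (e - f) = N e - N f := by
  have hidem : IsIdempotentElem (e - f) := by
    simp only [IsIdempotentElem, sub_mul, mul_sub, he.eq, hf.eq, hef, hfe, sub_self, sub_zero]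
  have h := hN.add_of_orthogonal (e - f) f hidem hf (by rw [sub_mul, hef, hf.eq, sub_self])
    (by rw [mul_sub, hfe, hf.eq, sub_self])
  rw [sub_add_cancel] at h
  linarith

lemma one_sub (hN : IsPseudoRankFunction N) {e : R} (he : IsIdempotentElem e) :
    N (1 - e) = 1 - N e := by
  rw [hN.sub_eq_of_mul_eq .one he (one_mul e) (mul_one e), hN.map_one]

lemma sum_of_orthogonalIdempotents (hN : IsPseudoRankFunction N) {I : Type*} {f : I → R}
    (hf : OrthogonalIdempotents f) (s : Finset I) : N (∑ i ∈ s, f i) = ∑ i ∈ s, N (f i) := by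
  classical
  induction s using Finset.induction_on with
  | empty => simp [hN.map_zero]
  | insert a s ha ih =>
    rw [Finset.sum_insert ha, Finset.sum_insert ha,
      hN.add_of_orthogonal _ _ (hf.idem a) hf.isIdempotentElem_sum (hf.mul_sum_of_notMem ha) ?_, ih]
    rw [Finset.sum_mul]
    exact Finset.sum_eq_zero fun i hi => hf.ortho (ne_of_mem_of_not_mem hi ha)

lemma comp (hN : IsPseudoRankFunction N) {S : Type*} [Ring S] (f : S →+* R) :
    IsPseudoRankFunction fun x => N (f x) where
  nonneg x := hN.nonneg _
  le_one x := hN.le_one _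
  map_one := by rw [_root_.map_one, hN.map_one]
  subadditive a b := by rw [map_add]; exact hN.subadditive _ _
  mul_le_left a b := by rw [map_mul]; exact hN.mul_le_left _ _
  mul_le_right a b := by rw [map_mul]; exact hN.mul_le_right _ _
  add_of_orthogonal a b ha hb hab hba := by
    rw [map_add]
    exact hN.add_of_orthogonal _ _ (ha.map f) (hb.map f) (by rw [← map_mul, hab, map_zero])
      (by rw [← map_mul, hba, map_zero])

end IsPseudoRankFunction

/-! ### Orthogonal copies of idempotents and matrix units -/

/-- `X i` and `Y i` implement an equivalence between the idempotent `g i` and the idempotent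
`X i * Y i`, and the idempotents `X i * Y i` are pairwise orthogonal. -/
structure OrthogonalCopies {R I : Type*} [Ring R] [DecidableEq I] (g X Y : I → R) : Prop where
  mul_eq : ∀ i j, Y i * X j = if i = j then g i else 0
  left_mul : ∀ i, X i * g i = X i
  mul_right : ∀ i, g i * Y i = Y i

namespace OrthogonalCopies

variable {R I : Type*} [Ring R] [DecidableEq I] {g X Y : I → R}

lemma mul_self (h : OrthogonalCopies g X Y) (i : I) : Y i * X i = g i := by
  rw [h.mul_eq, if_pos rfl]

lemma mul_of_ne (h : OrthogonalCopies g X Y) {i j : I} (hij : i ≠ j) : Y i * X j = 0 := by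
  rw [h.mul_eq, if_neg hij]

lemma orthogonalIdempotents (h : OrthogonalCopies g X Y) :
    OrthogonalIdempotents fun i => X i * Y i where
  idem i := by
    rw [IsIdempotentElem, mul_assoc, ← mul_assoc (Y i), h.mul_self, h.mul_right]
  ortho i j hij := by
    change X i * Y i * (X j * Y j) = 0
    rw [mul_assoc, ← mul_assoc (Y i), h.mul_of_ne hij, zero_mul, mul_zero]

lemma isIdempotentElem_sum [Fintype I] (h : OrthogonalCopies g X Y) :
    IsIdempotentElem (∑ i, X i * Y i) :=
  h.orthogonalIdempotents.isIdempotentElem_sum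

lemma rank_sum [Fintype I] {N : R → ℝ} (h : OrthogonalCopies g X Y)
    (hN : IsPseudoRankFunction N) : N (∑ i, X i * Y i) = ∑ i, N (g i) := by
  rw [hN.sum_of_orthogonalIdempotents h.orthogonalIdempotents]
  exact Finset.sum_congr rfl fun i _ => hN.mul_eq_of_mul_eq (h.mul_self i) (h.left_mul i)

lemma sum_mul_left [Fintype I] (h : OrthogonalCopies g X Y) (j : I) :
    (∑ i, X i * Y i) * X j = X j := by
  simp [Finset.sum_mul, mul_assoc, h.mul_eq, h.left_mul]

lemma right_mul_sum [Fintype I] (h : OrthogonalCopies g X Y) (j : I) :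
    Y j * ∑ i, X i * Y i = Y j := by
  simp [Finset.mul_sum, ← mul_assoc, h.mul_eq, h.mul_right]

lemma map {S : Type*} [Ring S] (f : R →+* S) (h : OrthogonalCopies g X Y) :
    OrthogonalCopies (fun i => f (g i)) (fun i => f (X i)) (fun i => f (Y i)) where
  mul_eq i j := by rw [← map_mul, h.mul_eq, apply_ite f, map_zero]
  left_mul i := by rw [← map_mul, h.left_mul]
  mul_right i := by rw [← map_mul, h.mul_right]

lemma of_map {S : Type*} [Ring S] {f : R →+* S} (hf : Function.Injective f)
    (h : OrthogonalCopies (fun i => f (g i)) (fun i => f (X i)) (fun i => f (Y i))) :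
    OrthogonalCopies g X Y where
  mul_eq i j := hf (by rw [map_mul, h.mul_eq, apply_ite f, map_zero])
  left_mul i := hf (by rw [map_mul, h.left_mul])
  mul_right i := hf (by rw [map_mul, h.mul_right])

lemma reindex {I' : Type*} [DecidableEq I'] (h : OrthogonalCopies g X Y) {φ : I' → I}
    (hφ : Function.Injective φ) : OrthogonalCopies (g ∘ φ) (X ∘ φ) (Y ∘ φ) where
  mul_eq i j := by simp [h.mul_eq, hφ.eq_iff]
  left_mul i := h.left_mul _
  mul_right i := h.mul_right _

lemma sumElim [Fintype I] {I' : Type*} [DecidableEq I'] {g' X' Y' : I' → R}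
    (h : OrthogonalCopies g X Y) (h' : OrthogonalCopies g' X' Y')
    (hX' : ∀ i, (1 - ∑ i, X i * Y i) * X' i = X' i)
    (hY' : ∀ i, Y' i * (1 - ∑ i, X i * Y i) = Y' i) :
    OrthogonalCopies (Sum.elim g g') (Sum.elim X X') (Sum.elim Y Y') where
  mul_eq := by
    rintro (i | i) (j | j)
    · simp [h.mul_eq]
    · rw [Sum.elim_inl, Sum.elim_inr, ← hX', ← mul_assoc, mul_sub, h.right_mul_sum]
      simp
    · rw [Sum.elim_inl, Sum.elim_inr, ← hY', mul_assoc, sub_mul, h.sum_mul_left]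
      simp
    · simp [h'.mul_eq]
  left_mul := Sum.rec h.left_mul h'.left_mul
  mul_right := Sum.rec h.mul_right h'.mul_right

lemma comp {L : I → Type*} [∀ i, DecidableEq (L i)] {f u v : ∀ i, L i → R}
    (h : OrthogonalCopies g X Y) (huv : ∀ i, OrthogonalCopies (f i) (u i) (v i))
    (hu : ∀ i l, g i * u i l = u i l) :
    OrthogonalCopies (fun p : Sigma L => f p.1 p.2) (fun p => X p.1 * u p.1 p.2)
      (fun p => v p.1 p.2 * Y p.1) where
  mul_eq := by
    rintro ⟨i, a⟩ ⟨j, b⟩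
    have hassoc : v i a * Y i * (X j * u j b) = v i a * (Y i * X j * u j b) := by
      simp only [mul_assoc]
    rw [hassoc]
    obtain rfl | hij := eq_or_ne i j
    · simp [h.mul_self, hu, (huv i).mul_eq]
    · simp [h.mul_of_ne hij, hij]
  left_mul p := by rw [mul_assoc, (huv p.1).left_mul]
  mul_right p := by rw [← mul_assoc, (huv p.1).mul_right]

lemma prod {L : Type*} [DecidableEq L] {e : R} {f u v : L → R}
    (h : OrthogonalCopies (fun _ => e) X Y) (huv : OrthogonalCopies f u v)
    (hu : ∀ l, e * u l = u l) :
    OrthogonalCopies (fun p : I × L => f p.2) (fun p => X p.1 * u p.2)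
      (fun p => v p.2 * Y p.1) :=
  (h.comp (fun _ => huv) (fun _ => hu)).reindex (Equiv.sigmaEquivProd I L).symm.injective

lemma rank_sub_sum [Fintype I] {N : R → ℝ} {e : R} (h : OrthogonalCopies g X Y)
    (hN : IsPseudoRankFunction N) (he : IsIdempotentElem e) (hX : ∀ i, e * X i = X i)
    (hY : ∀ i, Y i * e = Y i) : N (e - ∑ i, X i * Y i) = N e - ∑ i, N (g i) := by
  rw [hN.sub_eq_of_mul_eq he h.isIdempotentElem_sum ?_ ?_, h.rank_sum hN]
  · simp only [Finset.mul_sum, ← mul_assoc, hX]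
  · simp only [Finset.sum_mul, mul_assoc, hY]

end OrthogonalCopies

/-- A system of matrix units, whose diagonal entries need not add up to `1`. -/
def IsMatrixUnits {R S : Type*} [Ring R] [DecidableEq S] (E : S → S → R) : Prop :=
  ∀ s t t' u, E s t * E t' u = if t = t' then E s u else 0

lemma OrthogonalCopies.isMatrixUnits {R I : Type*} [Ring R] [DecidableEq I] {e : R} {X Y : I → R}
    (h : OrthogonalCopies (fun _ => e) X Y) : IsMatrixUnits fun s t => X s * Y t := by
  intro s t t' u
  rw [mul_assoc, ← mul_assoc (Y t), h.mul_eq]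
  split_ifs
  · rw [h.mul_right]
  · rw [zero_mul, mul_zero]

namespace IsMatrixUnits

variable {R S : Type*} [Ring R] [DecidableEq S] {E : S → S → R}

lemma mul_self (hE : IsMatrixUnits E) (s t u : S) : E s t * E t u = E s u := by
  rw [hE, if_pos rfl]

lemma mul_of_ne (hE : IsMatrixUnits E) {t t' : S} (htt' : t ≠ t') (s u : S) :
    E s t * E t' u = 0 := by
  rw [hE, if_neg htt']

lemma orthogonalCopies (hE : IsMatrixUnits E) (s₀ : S) :
    OrthogonalCopies (fun _ => E s₀ s₀) (fun s => E s s₀) (fun s => E s₀ s) where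
  mul_eq _ _ := hE _ _ _ _
  left_mul s := hE.mul_self s s₀ s₀
  mul_right s := hE.mul_self s₀ s₀ s

lemma isIdempotentElem_sum [Fintype S] (hE : IsMatrixUnits E) :
    IsIdempotentElem (∑ s, E s s) := by
  have horth : OrthogonalIdempotents fun s => E s s :=
    ⟨fun s => hE.mul_self s s s, fun s t hst => hE.mul_of_ne hst s t⟩
  exact horth.isIdempotentElem_sum

lemma card_mul_rank [Fintype S] {N : R → ℝ} (hE : IsMatrixUnits E)
    (hN : IsPseudoRankFunction N) (s₀ : S) :
    Fintype.card S * N (E s₀ s₀) = 1 - N (1 - ∑ s, E s s) := by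
  have hrank := (hE.orthogonalCopies s₀).rank_sum hN
  simp only [hE.mul_self, Finset.sum_const, Finset.card_univ, nsmul_eq_mul] at hrank
  rw [hN.one_sub hE.isIdempotentElem_sum, hrank, sub_sub_cancel]

end IsMatrixUnits

lemma OrthogonalCopies.of_injective {R I P Q L : Type*} [Ring R] [DecidableEq P] [Fintype Q]
    [DecidableEq Q] [DecidableEq L] {f : I → R} {t : P → I} {t' : Q → I} {x y : P → R}
    {x' y' : Q → R} (h : OrthogonalCopies (f ∘ t) x y) (h' : OrthogonalCopies (f ∘ t') x' y')
    {c : L × Q → P} (hc : Function.Injective c) (ht : ∀ p, t (c p) = t' p.2) :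
    OrthogonalCopies (fun _ : L => ∑ q, x' q * y' q) (fun l => ∑ q, x (c (l, q)) * y' q)
      (fun l => ∑ q, x' q * y (c (l, q))) where
  mul_eq l l' := by
    have hterm (q q' : Q) : x' q * y (c (l, q)) * (x (c (l', q')) * y' q') =
        if l = l' ∧ q = q' then x' q * y' q else 0 := by
      rw [mul_assoc, ← mul_assoc (y _), h.mul_eq]
      simp only [hc.eq_iff, Prod.mk.injEq]
      split_ifs with hq
      · rw [Function.comp_apply, ht, ← hq.2]
        exact congrArg _ (h'.mul_right q)
      · rw [zero_mul, mul_zero]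
    rw [Finset.sum_mul_sum]
    simp only [hterm, ite_and]
    split_ifs <;> simp
  left_mul l := by
    rw [Finset.sum_mul]
    exact Finset.sum_congr rfl fun q _ => by rw [mul_assoc, h'.right_mul_sum]
  mul_right l := by
    rw [Finset.mul_sum]
    exact Finset.sum_congr rfl fun q _ => by rw [← mul_assoc, h'.sum_mul_left]

lemma OrthogonalCopies.piSingle {J : Type*} [DecidableEq J] {R L : J → Type*} [∀ j, Ring (R j)]
    [∀ j, DecidableEq (L j)] {g x y : ∀ j, L j → R j}
    (h : ∀ j, OrthogonalCopies (g j) (x j) (y j)) :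
    OrthogonalCopies (fun p : Sigma L => (Pi.single p.1 (g p.1 p.2) : ∀ j, R j))
      (fun p => Pi.single p.1 (x p.1 p.2)) (fun p => Pi.single p.1 (y p.1 p.2)) where
  mul_eq := by
    rintro ⟨i, a⟩ ⟨j, b⟩
    obtain rfl | hij := eq_or_ne i j
    · rw [← Pi.single_mul, (h i).mul_eq]
      by_cases hab : a = b <;> simp [hab]
    · have hne : (⟨i, a⟩ : Sigma L) ≠ ⟨j, b⟩ := fun h => hij (congrArg Sigma.fst h)
      rw [if_neg hne]
      funext k
      obtain rfl | hki := eq_or_ne k i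
      · rw [Pi.mul_apply, Pi.single_eq_of_ne hij, mul_zero, Pi.zero_apply]
      · rw [Pi.mul_apply, Pi.single_eq_of_ne hki, zero_mul, Pi.zero_apply]
  left_mul p := by rw [← Pi.single_mul, (h p.1).left_mul]
  mul_right p := by rw [← Pi.single_mul, (h p.1).mul_right]

/-! ### Idempotents in products of matrix rings -/

section MatrixRank

variable {K m n : Type*} [Field K] [Fintype n]

lemma matrix_rank_add_le [Finite m] (a b : Matrix m n K) : (a + b).rank ≤ a.rank + b.rank := by
  rw [Matrix.rank, Matrix.mulVecLin_add]
  exact (Submodule.finrank_mono (LinearMap.range_add_le _ _)).trans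
    (Submodule.finrank_add_le_finrank_add_finrank _ _)

lemma matrix_rank_sum_le [Finite m] {I : Type*} (s : Finset I) (a : I → Matrix m n K) :
    (∑ i ∈ s, a i).rank ≤ ∑ i ∈ s, (a i).rank :=
  Finset.le_sum_of_subadditive (M := Matrix m n K) (N := ℕ) Matrix.rank Matrix.rank_zero.le
    matrix_rank_add_le s a

lemma exists_rank_factorization_of_isIdempotentElem {e : Matrix n n K}
    (he : IsIdempotentElem e) :
    ∃ (U : Matrix n (Fin e.rank) K) (V : Matrix (Fin e.rank) n K), U * V = e ∧ V * U = 1 := by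
  classical
  set f := Matrix.toLin' e with hf
  let c : LinearMap.range f ≃ₗ[K] (Fin e.rank → K) :=
    (Module.finBasisOfFinrankEq K (LinearMap.range f) rfl).equivFun
  have hfix (w : LinearMap.range f) : f.rangeRestrict w = w := by
    obtain ⟨_, v, rfl⟩ := w
    ext1
    simp [hf, he.eq]
  refine ⟨LinearMap.toMatrix' ((LinearMap.range f).subtype ∘ₗ c.symm.toLinearMap),
    LinearMap.toMatrix' (c.toLinearMap ∘ₗ f.rangeRestrict), ?_, ?_⟩
  · rw [← LinearMap.toMatrix'_comp]
    refine Eq.trans (congrArg _ ?_) (LinearMap.toMatrix'_toLin' e)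
    refine LinearMap.ext fun v => ?_
    simp [hf]
  · rw [← LinearMap.toMatrix'_comp, ← LinearMap.toMatrix'_id]
    congr 1
    refine LinearMap.ext fun v => ?_
    simp [hfix]

lemma exists_orthogonalCopies_single [DecidableEq n] {e : Matrix n n K} (he : IsIdempotentElem e)
    (b : n) :
    ∃ x y : Fin e.rank → Matrix n n K,
      OrthogonalCopies (fun _ => Matrix.single b b (1 : K)) x y ∧ ∑ p, x p * y p = e := by
  obtain ⟨U, V, hUV, hVU⟩ := exists_rank_factorization_of_isIdempotentElem he
  refine ⟨fun p => U * Matrix.single p b (1 : K), fun p => Matrix.single b p (1 : K) * V,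
    ⟨fun p q => ?_, fun p => ?_, fun p => ?_⟩, ?_⟩
  · rw [Matrix.mul_assoc, ← Matrix.mul_assoc V, hVU, Matrix.one_mul]
    split_ifs with hpq
    · rw [hpq, Matrix.single_mul_single_same, one_mul]
    · rw [Matrix.single_mul_single_of_ne _ _ _ _ hpq]
  · rw [Matrix.mul_assoc, Matrix.single_mul_single_same, one_mul]
  · rw [← Matrix.mul_assoc, Matrix.single_mul_single_same, one_mul]
  · have hterm (p : Fin e.rank) : U * Matrix.single p b (1 : K) * (Matrix.single b p (1 : K) * V) =
        U * Matrix.single p p (1 : K) * V := by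
      rw [Matrix.mul_assoc, ← Matrix.mul_assoc (Matrix.single p b _),
        Matrix.single_mul_single_same, one_mul, Matrix.mul_assoc]
    simp only [hterm]
    rw [← Matrix.sum_mul, ← Matrix.mul_sum, Matrix.sum_single_one, Matrix.mul_one, hUV]

end MatrixRank

/-- The product over `j` of the rings of square matrices with index type `m j`. -/
abbrev BlockMatrix {J : Type*} (m : J → Type*) (R : Type*) : Type _ := ∀ j, Matrix (m j) (m j) R

namespace BlockMatrix

variable {J : Type*} [DecidableEq J] {m : J → Type*} [∀ j, DecidableEq (m j)]

/-- The minimal idempotent of block `j` given by the diagonal entry at the base point `b j`. -/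
def minIdempotent (R : Type*) [Ring R] (b : ∀ j, m j) (j : J) : BlockMatrix m R :=
  Pi.single j (Matrix.single (b j) (b j) 1)

/-- The central idempotent which is the sum of the identities of the blocks in `S`. -/
def blockIndicator (m : J → Type*) [∀ j, DecidableEq (m j)] (R : Type*) [Ring R]
    (S : Finset J) : BlockMatrix m R :=
  fun j => if j ∈ S then 1 else 0

variable [∀ j, Fintype (m j)] {R : Type*} [Ring R]

lemma isIdempotentElem_blockIndicator (S : Finset J) :
    IsIdempotentElem (blockIndicator m R S) := by
  funext j
  by_cases hj : j ∈ S <;> simp [blockIndicator, hj]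

lemma commute_blockIndicator (S : Finset J) (x : BlockMatrix m R) :
    Commute (blockIndicator m R S) x := by
  funext j
  by_cases hj : j ∈ S <;> simp [blockIndicator, hj]

lemma minIdempotent_mul_mul_minIdempotent (b : ∀ j, m j) (i j : J) (a : BlockMatrix m R) :
    minIdempotent R b i * a * minIdempotent R b j =
      if i = j then (fun _ => a i (b i) (b i) • 1) * minIdempotent R b i
      else 0 := by
  funext k
  obtain rfl | hki := eq_or_ne k i
  · obtain rfl | hkj := eq_or_ne k j
    · simp [minIdempotent, Matrix.single_mul_mul_single]
    · simp [minIdempotent, hkj]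
  · split_ifs <;> simp [minIdempotent, hki]

variable {K : Type*} [Field K]

lemma exists_orthogonalCopies_minIdempotent [Fintype J] {e : BlockMatrix m K}
    (he : IsIdempotentElem e) (b : ∀ j, m j) :
    ∃ x y : (Σ j, Fin (e j).rank) → BlockMatrix m K,
      OrthogonalCopies (minIdempotent K b ∘ Sigma.fst) x y ∧ ∑ p, x p * y p = e := by
  choose x y hxy hsum using fun j => exists_orthogonalCopies_single (congrFun he j) (b j)
  refine ⟨_, _, OrthogonalCopies.piSingle hxy, ?_⟩
  have hsingle (j : J) (f : Fin (e j).rank → Matrix (m j) (m j) K) :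
      (Pi.single j (∑ p, f p) : BlockMatrix m K) = ∑ p, Pi.single j (f p) :=
    map_sum (AddMonoidHom.single (fun j => Matrix (m j) (m j) K) j) f Finset.univ
  calc ∑ p : Σ j, Fin (e j).rank, (Pi.single p.1 (x p.1 p.2) * Pi.single p.1 (y p.1 p.2) :
          BlockMatrix m K)
      = ∑ j, Pi.single j (∑ p, x j p * y j p) := by
        simp only [Fintype.sum_sigma, ← Pi.single_mul, hsingle]
    _ = e := by
        simp only [hsum]
        exact Finset.univ_sum_single e

lemma rank_eq_sum [Fintype J] {N : BlockMatrix m K → ℝ} (hN : IsPseudoRankFunction N)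
    {e : BlockMatrix m K} (he : IsIdempotentElem e) (b : ∀ j, m j) :
    N e = ∑ j, (e j).rank * N (minIdempotent K b j) := by
  obtain ⟨x, y, hxy, hsum⟩ := exists_orthogonalCopies_minIdempotent he b
  nth_rw 1 [← hsum]
  rw [hxy.rank_sum hN, Fintype.sum_sigma]
  simp

lemma rank_blockIndicator_mul [Finite J] {N : BlockMatrix m K → ℝ}
    (hN : IsPseudoRankFunction N) {e : BlockMatrix m K} (he : IsIdempotentElem e)
    (b : ∀ j, m j) (S : Finset J) :
    N (blockIndicator m K S * e) = ∑ j ∈ S, (e j).rank * N (minIdempotent K b j) := by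
  have := Fintype.ofFinite J
  rw [rank_eq_sum hN ((isIdempotentElem_blockIndicator S).mul_of_commute
    (commute_blockIndicator S e) he) b, ← Finset.sum_subset (Finset.subset_univ S)]
  · refine Finset.sum_congr rfl fun j hj => ?_
    rw [Pi.mul_apply, blockIndicator, if_pos hj, one_mul]
  · intro j _ hj
    simp [blockIndicator, hj]

end BlockMatrix

lemma BlockMatrix.exists_orthogonalCopies_of_rank_le {J L K : Type*} [Finite J] [Fintype L]
    [DecidableEq L] [Field K] {m : J → Type*} [∀ j, Fintype (m j)] [∀ j, DecidableEq (m j)]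
    {g e : BlockMatrix m K} (hg : IsIdempotentElem g) (he : IsIdempotentElem e) (b : ∀ j, m j)
    (hle : ∀ j, Fintype.card L * (g j).rank ≤ (e j).rank) :
    ∃ X Y : L → BlockMatrix m K, OrthogonalCopies (fun _ => g) X Y ∧
      (∀ l, e * X l = X l) ∧ ∀ l, Y l * e = Y l := by
  classical
  have := Fintype.ofFinite J
  obtain ⟨x, y, hxy, hsum⟩ := exists_orthogonalCopies_minIdempotent he b
  obtain ⟨x', y', hxy', hsum'⟩ := exists_orthogonalCopies_minIdempotent hg b
  have hcard (j : J) : Fintype.card (L × Fin (g j).rank) ≤ Fintype.card (Fin (e j).rank) := by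
    simpa using hle j
  let c (j : J) := (Function.Embedding.nonempty_of_card_le (hcard j)).some
  let c' : L × (Σ j, Fin (g j).rank) → Σ j, Fin (e j).rank :=
    fun p => ⟨p.2.1, c p.2.1 (p.1, p.2.2)⟩
  have hc' : Function.Injective c' := by
    rintro ⟨l, j, q⟩ ⟨l', j', q'⟩ h
    obtain rfl : j = j' := congrArg Sigma.fst h
    have := (c j).injective (eq_of_heq (Sigma.mk.inj h).2)
    grind
  have hcopies := hxy.of_injective hxy' hc' fun _ => rfl
  rw [hsum'] at hcopies
  refine ⟨_, _, hcopies, fun l => ?_, fun l => ?_⟩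
  · rw [← hsum, Finset.mul_sum]
    exact Finset.sum_congr rfl fun q _ => by rw [← mul_assoc, hxy.sum_mul_left]
  · rw [← hsum, Finset.sum_mul]
    exact Finset.sum_congr rfl fun q _ => by rw [mul_assoc, hxy.right_mul_sum]

lemma BlockMatrix.exists_isIdempotentElem_rank_eq {J : Type*} (K : Type*) [Field K]
    {m : J → Type*} [∀ j, Fintype (m j)] (n : J → ℕ) (hn : ∀ j, n j ≤ Fintype.card (m j)) :
    ∃ g : BlockMatrix m K, IsIdempotentElem g ∧ ∀ j, (g j).rank = n j := by
  classical
  choose s _ hs using fun j =>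
    Finset.exists_subset_card_eq (s := (Finset.univ : Finset (m j))) (n := n j)
      (by simpa using hn j)
  refine ⟨fun j => Matrix.diagonal fun p => if p ∈ s j then 1 else 0, funext fun j => ?_,
    fun j => ?_⟩
  · simp
  · simp [Matrix.rank_diagonal, hs]

lemma BlockMatrix.card_le_rank_one_sub_add {J L K : Type*} [Fintype L] [DecidableEq L] [Field K]
    {m : J → Type*} [∀ j, Fintype (m j)] [∀ j, DecidableEq (m j)] {g : BlockMatrix m K}
    {X Y : L → BlockMatrix m K} (h : OrthogonalCopies (fun _ => g) X Y) (j : J) :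
    Fintype.card (m j) ≤
      ((1 - ∑ l, X l * Y l : BlockMatrix m K) j).rank + Fintype.card L * (g j).rank := by
  have hrank (l : L) : (X l j * Y l j).rank ≤ (g j).rank := by
    rw [← congrFun (h.left_mul l) j]
    exact (Matrix.rank_mul_le_left _ _).trans (Matrix.rank_mul_le_right _ _)
  calc Fintype.card (m j) = (1 : Matrix (m j) (m j) K).rank := Matrix.rank_one.symm
    _ = ((1 - ∑ l, X l * Y l : BlockMatrix m K) j + ∑ l, X l j * Y l j).rank := by simp
    _ ≤ ((1 - ∑ l, X l * Y l : BlockMatrix m K) j).rank + (∑ l, X l j * Y l j).rank :=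
      matrix_rank_add_le _ _
    _ ≤ _ := by
      gcongr
      refine (matrix_rank_sum_le _ _).trans ((Finset.sum_le_sum fun l _ => hrank l).trans ?_)
      simp

/-! ### Extremality and asymptotic independence -/

section Extremality

open Filter Topology

lemma vnRegular_of_isSemisimpleRing (R : Type*) [Ring R] [IsSemisimpleRing R] : VNRegular R := by
  intro x
  obtain ⟨e, he, hspan⟩ := IsSemisimpleRing.ideal_eq_span_idempotent (Ideal.span {x})
  obtain ⟨y, hy⟩ := Ideal.mem_span_singleton'.1 (hspan ▸ Ideal.mem_span_singleton_self e)
  obtain ⟨r, hr⟩ := Ideal.mem_span_singleton'.1 (hspan ▸ Ideal.mem_span_singleton_self x)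
  exact ⟨y, by rw [mul_assoc, hy, ← hr, mul_assoc, he.eq]⟩

lemma VNRegular.exists_mul_mul_eq_of_corner {R : Type*} [Ring R] (hreg : VNRegular R) {z a : R}
    (hz : IsIdempotentElem z) (hza : z * a = a) (haz : a * z = a) :
    ∃ w, z * w = w ∧ w * z = w ∧ a * w * a = a := by
  obtain ⟨w, hw⟩ := hreg a
  refine ⟨z * w * z, ?_, ?_, ?_⟩
  · rw [← mul_assoc, ← mul_assoc, hz.eq]
  · rw [mul_assoc, hz.eq]
  · rw [mul_assoc, mul_assoc, hza, ← mul_assoc, ← mul_assoc, haz, ← hw]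

variable {R : Type*} [Ring R] {N : R → ℝ}

lemma IsPseudoRankFunction.add_of_orthogonal_corners (hN : IsPseudoRankFunction N)
    (hreg : VNRegular R) {z z' a b : R} (hz : IsIdempotentElem z) (hz' : IsIdempotentElem z')
    (hzz' : z * z' = 0) (hz'z : z' * z = 0) (hza : z * a = a) (haz : a * z = a)
    (hzb : z' * b = b) (hbz : b * z' = b) : N (a + b) = N a + N b := by
  obtain ⟨v, hzv, hvz, hv⟩ := hreg.exists_mul_mul_eq_of_corner hz hza haz
  obtain ⟨w, hzw, hwz, hw⟩ := hreg.exists_mul_mul_eq_of_corner hz' hzb hbz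
  have hrank {c u : R} (hu : c * u * c = c) : N (c * u) = N c :=
    (hN.mul_le_left c u).antisymm ((congrArg N hu).symm.le.trans (hN.mul_le_left _ _))
  have hidem {c u : R} (hu : c * u * c = c) : IsIdempotentElem (c * u) := by
    rw [IsIdempotentElem, ← mul_assoc, hu]
  have hzero {p q c d : R} (hpq : p * q = 0) (hc : c * p = c) (hd : q * d = d) : c * d = 0 := by
    rw [← hc, ← hd, mul_assoc, ← mul_assoc p, hpq, zero_mul, mul_zero]
  refine (hN.subadditive a b).antisymm ?_
  calc N a + N b = N (a * v + b * w) := by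
        rw [hN.add_of_orthogonal _ _ (hidem hv) (hidem hw), hrank hv, hrank hw]
        · rw [mul_assoc, ← mul_assoc v, hzero hzz' hvz hzb, zero_mul, mul_zero]
        · rw [mul_assoc, ← mul_assoc w, hzero hz'z hwz hza, zero_mul, mul_zero]
    _ = N ((a + b) * (v + w)) := by
        rw [add_mul, mul_add, mul_add, hzero hzz' haz hzw, hzero hz'z hbz hzv, add_zero, zero_add]
    _ ≤ N (a + b) := hN.mul_le_left _ _

lemma IsPseudoRankFunction.mul_add_one_sub_mul (hN : IsPseudoRankFunction N) (hreg : VNRegular R)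
    {z x : R} (hz : IsIdempotentElem z) (hzx : Commute z x) :
    N (z * x) + N ((1 - z) * x) = N x := by
  rw [← hN.add_of_orthogonal_corners hreg hz hz.one_sub hz.mul_one_sub_self hz.one_sub_mul_self,
    ← add_mul, add_sub_cancel, one_mul]
  · rw [← mul_assoc, hz.eq]
  · rw [hzx.eq, mul_assoc, hz.eq]
  · rw [← mul_assoc, hz.one_sub.eq]
  · rw [((Commute.one_left x).sub_left hzx).eq, mul_assoc, hz.one_sub.eq]

lemma IsPseudoRankFunction.mul_add_of_orthogonal (hN : IsPseudoRankFunction N) {z e f : R}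
    (hz : IsIdempotentElem z) (he : IsIdempotentElem e) (hf : IsIdempotentElem f)
    (hef : e * f = 0) (hfe : f * e = 0) (hze : Commute z e) (hzf : Commute z f) :
    N (z * (e + f)) = N (z * e) + N (z * f) := by
  rw [mul_add, hN.add_of_orthogonal _ _ (hz.mul_of_commute hze he) (hz.mul_of_commute hzf hf)]
  · rw [hzf.eq, mul_assoc, ← mul_assoc e, hef, zero_mul, mul_zero]
  · rw [hze.eq, mul_assoc, ← mul_assoc f, hfe, zero_mul, mul_zero]

lemma IsPseudoRankFunction.of_tendsto_mul (hN : IsPseudoRankFunction N) {I : Type*} {l : Filter I}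
    [l.NeBot] {z : I → R} {F : R → ℝ} (hz : ∀ i, IsIdempotentElem (z i))
    (hcomm : ∀ x, ∀ᶠ i in l, Commute (z i) x)
    (hF : ∀ x, Tendsto (fun i => N (z i * x)) l (𝓝 (F x))) (hF1 : 0 < F 1) :
    IsPseudoRankFunction fun x => F x / F 1 := by
  have hleft (x y : R) : F (x * y) ≤ F x :=
    le_of_tendsto_of_tendsto' (hF _) (hF x) fun i => by
      rw [← mul_assoc]; exact hN.mul_le_left _ _
  have hright (x y : R) : F (x * y) ≤ F y := by
    refine le_of_tendsto_of_tendsto (hF _) (hF y) ((hcomm x).mono fun i hi => ?_)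
    change N (z i * (x * y)) ≤ _
    rw [← mul_assoc, hi.eq, mul_assoc]
    exact hN.mul_le_right _ _
  refine ⟨fun x => div_nonneg (ge_of_tendsto' (hF x) fun i => hN.nonneg _) hF1.le,
    fun x => (div_le_one hF1).2 (by simpa using hleft 1 x), div_self hF1.ne', fun x y => ?_,
    fun x y => ?_, fun x y => ?_, fun e f he hf hef hfe => ?_⟩
  · rw [← add_div]
    gcongr
    refine le_of_tendsto_of_tendsto' (hF _) ((hF x).add (hF y)) fun i => ?_
    rw [mul_add]
    exact hN.subadditive _ _
  · gcongr
    exact hleft x y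
  · gcongr
    exact hright x y
  · rw [← add_div]
    congr 1
    refine tendsto_nhds_unique_of_eventuallyEq (hF _) ((hF e).add (hF f)) ?_
    filter_upwards [hcomm e, hcomm f] with i hie hif
    exact hN.mul_add_of_orthogonal (hz i) he hf hef hfe hie hif

lemma IsExtremalPseudoRankFunction.eq_mul_of_add_eq (hext : IsExtremalPseudoRankFunction N)
    {F G : R → ℝ} (hF : 0 < F 1 → IsPseudoRankFunction fun x => F x / F 1)
    (hG : 0 < G 1 → IsPseudoRankFunction fun x => G x / G 1)
    (hF0 : ∀ x, 0 ≤ F x) (hG0 : ∀ x, 0 ≤ G x) (hF1 : ∀ x, F x ≤ F 1) (hG1 : ∀ x, G x ≤ G 1)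
    (hFG : ∀ x, F x + G x = N x) (x : R) : F x = F 1 * N x := by
  have hN1 : N 1 = 1 := hext.1.map_one
  obtain hF' | hF' := (hF0 1).eq_or_lt
  · rw [← hF', zero_mul]
    exact ((hF1 x).trans_eq hF'.symm).antisymm (hF0 x)
  obtain hG' | hG' := (hG0 1).eq_or_lt
  · have hGx : G x = 0 := ((hG1 x).trans_eq hG'.symm).antisymm (hG0 x)
    have hF1' : F 1 = 1 := by rw [← add_zero (F 1), hG', hFG, hN1]
    rw [hF1', one_mul, ← hFG, hGx, add_zero]
  have hseg : N ∈ openSegment ℝ (fun x => F x / F 1) (fun x => G x / G 1) := by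
    refine ⟨F 1, G 1, hF', hG', (hFG 1).trans hN1, funext fun y => ?_⟩
    simp only [Pi.add_apply, Pi.smul_apply, smul_eq_mul]
    rw [mul_div_cancel₀ _ hF'.ne', mul_div_cancel₀ _ hG'.ne', hFG]
  rw [← congrFun ((mem_extremePoints.1 hext).2 _ (hF hF') _ (hG hG') hseg).1 x,
    mul_div_cancel₀ _ hF'.ne']

lemma IsPseudoRankFunction.exists_tendsto_ultrafilter (hN : IsPseudoRankFunction N) {I : Type*}
    (U : Ultrafilter I) (u : I → R) : ∃ l, Tendsto (fun i => N (u i)) U (𝓝 l) := by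
  have hmem : Set.Icc (0 : ℝ) 1 ∈ U.map fun i => N (u i) :=
    Ultrafilter.mem_map.2 (Filter.univ_mem' fun i => ⟨hN.nonneg _, hN.le_one _⟩)
  obtain ⟨l, -, hl⟩ := isCompact_Icc.ultrafilter_le_nhds _ (le_principal_iff.2 hmem)
  exact ⟨l, hl⟩

lemma IsExtremalPseudoRankFunction.tendsto_mul_of_ultrafilter
    (hext : IsExtremalPseudoRankFunction N) (hreg : VNRegular R)
    {I : Type*} (U : Ultrafilter I) {z : I → R} (hz : ∀ i, IsIdempotentElem (z i))
    (hcomm : ∀ x, ∀ᶠ i in (U : Filter I), Commute (z i) x) (a : R) :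
    Tendsto (fun i => N (z i * a) - N (z i) * N a) U (𝓝 0) := by
  have hN : IsPseudoRankFunction N := hext.1
  choose F hF using fun x => hN.exists_tendsto_ultrafilter U fun i => z i * x
  choose G hG using fun x => hN.exists_tendsto_ultrafilter U fun i => (1 - z i) * x
  have hle_one {t : I → R} {H : R → ℝ} (hH : ∀ x, Tendsto (fun i => N (t i * x)) U (𝓝 (H x)))
      (x : R) : H x ≤ H 1 :=
    le_of_tendsto_of_tendsto' (hH x) (hH 1) fun i => by
      rw [mul_one]; exact hN.mul_le_left _ _
  have hprod : F a = F 1 * N a :=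
    hext.eq_mul_of_add_eq (hN.of_tendsto_mul hz hcomm hF)
      (hN.of_tendsto_mul (fun i => (hz i).one_sub)
        (fun x => (hcomm x).mono fun i hi => (Commute.one_left x).sub_left hi) hG)
      (fun x => ge_of_tendsto' (hF x) fun i => hN.nonneg _)
      (fun x => ge_of_tendsto' (hG x) fun i => hN.nonneg _) (hle_one hF) (hle_one hG)
      (fun x => tendsto_nhds_unique_of_eventuallyEq ((hF x).add (hG x)) tendsto_const_nhds
        ((hcomm x).mono fun i hi => hN.mul_add_one_sub_mul hreg (hz i) hi)) a
  have hlim := (hF a).sub ((hF 1).mul_const (N a))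
  simpa only [mul_one, hprod, sub_self] using hlim

lemma IsExtremalPseudoRankFunction.eventually_abs_sub_lt (hext : IsExtremalPseudoRankFunction N)
    (hreg : VNRegular R)
    {C : ℕ → Subring R} (hC : Monotone C) (hcover : ∀ a, ∃ n, a ∈ C n) (a : R) {ε : ℝ}
    (hε : 0 < ε) :
    ∀ᶠ n in atTop, ∀ z ∈ C n, IsIdempotentElem z → (∀ x ∈ C n, Commute z x) →
      |N (z * a) - N z * N a| < ε := by
  by_contra hcon
  rw [eventually_atTop] at hcon
  push Not at hcon
  choose n hn z _ hz hzC hbad using hcon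
  have hcomm (x : R) : ∀ᶠ i in (hyperfilter ℕ : Filter ℕ), Commute (z i) x := by
    obtain ⟨k, hk⟩ := hcover x
    filter_upwards [Nat.hyperfilter_le_atTop (eventually_ge_atTop k)] with i hi
    exact hzC i x (hC (hi.trans (hn i)) hk)
  have hlim := (hext.tendsto_mul_of_ultrafilter hreg (hyperfilter ℕ) hz hcomm a).abs
  rw [abs_zero] at hlim
  exact hε.not_ge (ge_of_tendsto' hlim hbad)

end Extremality

/-! ### Elements of small rank in a continuous factor -/

section SmallRank

variable {R : Type*} [Ring R] {N : R → ℝ}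

lemma IsRankFunction.exists_minimal_idempotent (hN : IsRankFunction N) (hreg : VNRegular R) {c : ℝ}
    (hc : 0 < c) (hgap : ∀ x, N x = 0 ∨ c ≤ N x) :
    ∃ e : R, IsIdempotentElem e ∧ e ≠ 0 ∧
      ∀ h, IsIdempotentElem h → e * h = h → h * e = h → h ≠ 0 → h = e := by
  obtain ⟨hN, hfaithful⟩ := hN
  have hne : ({x : R | x ≠ 0}).Nonempty :=
    ⟨1, fun h => one_ne_zero (hN.map_one.symm.trans ((congrArg N h).trans hN.map_zero))⟩
  have hbdd : BddBelow (N '' {x | x ≠ 0}) := ⟨0, Set.forall_mem_image.2 fun x _ => hN.nonneg x⟩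
  obtain ⟨_, ⟨x, hx, rfl⟩, hlt⟩ :=
    exists_lt_of_csInf_lt (hne.image N) (lt_add_of_pos_right (sInf (N '' {x | x ≠ 0})) hc)
  obtain ⟨y, hy⟩ := hreg x
  have he : IsIdempotentElem (x * y) := by rw [IsIdempotentElem, ← mul_assoc, ← hy]
  refine ⟨x * y, he, fun h => hx (by rw [hy, h, zero_mul]), fun h hh hxh hhx hh0 => ?_⟩
  have hrank := hN.sub_eq_of_mul_eq he hh hxh hhx
  have hinf : sInf (N '' {x | x ≠ 0}) ≤ N h := csInf_le hbdd ⟨h, hh0, rfl⟩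
  have hxy : N (x * y) ≤ N x := hN.mul_le_left x y
  refine (sub_eq_zero.1 (hfaithful _ ((hgap _).resolve_right ?_))).symm
  linarith

lemma exists_mul_mul_ne_zero [IsSimpleRing R] {e f : R} (he : e ≠ 0) (hf : f ≠ 0) :
    ∃ q, f * q * e ≠ 0 := by
  by_contra! hcon
  let I : TwoSidedIdeal R := TwoSidedIdeal.mk' {t | ∀ q, f * q * t = 0} (by simp)
    (fun hs ht q => by rw [mul_add, hs q, ht q, add_zero])
    (fun hs q => by rw [mul_neg, hs q, neg_zero])
    (fun {s t} ht q => by rw [← mul_assoc, mul_assoc f, ht])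
    (fun hs q => by rw [← mul_assoc, hs q, zero_mul])
  have hmem (t : R) : t ∈ I ↔ ∀ q, f * q * t = 0 := by simp [I, TwoSidedIdeal.mem_mk']
  obtain hI | hI := eq_bot_or_eq_top I
  · exact he (by simpa [hI] using (hmem e).2 hcon)
  · exact hf (by simpa using (hmem 1).1 (hI ▸ trivial) 1)

lemma exists_mul_mul_eq_of_minimal_idempotent [IsSimpleRing R] (hreg : VNRegular R) {e f : R}
    (he : IsIdempotentElem e) (he0 : e ≠ 0)
    (hmin : ∀ h, IsIdempotentElem h → e * h = h → h * e = h → h ≠ 0 → h = e) (hf : f ≠ 0) :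
    ∃ u v, u * f * v = e := by
  obtain ⟨q, hq⟩ := exists_mul_mul_ne_zero he0 hf
  obtain ⟨x, hx⟩ : ∃ x, x = f * q * e := ⟨_, rfl⟩
  rw [← hx] at hq
  obtain ⟨y, hy⟩ := hreg x
  have hxe : x * e = x := by rw [hx, mul_assoc, he.eq]
  have hxeyx : x * (e * y * x) = x := by rw [← mul_assoc, ← mul_assoc, hxe, ← hy]
  have heyx : e * y * x = e := by
    refine hmin _ ?_ ?_ ?_ fun h => hq (by rw [← hxeyx, h, mul_zero])
    · rw [IsIdempotentElem, mul_assoc (e * y), hxeyx]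
    · rw [← mul_assoc, ← mul_assoc, he.eq]
    · rw [mul_assoc, hxe]
  exact ⟨e * y, q * e, by rw [mul_assoc, ← mul_assoc f, ← hx, heyx]⟩

lemma IsContinuousFactor.exists_rank_lt (hR : IsContinuousFactor R) (hN : IsRankFunction N) {c : ℝ}
    (hc : 0 < c) : ∃ x, 0 < N x ∧ N x < c := by
  obtain ⟨hsimple, hreg, -, -, M, ⟨hM, hMfaithful⟩, hrange⟩ := hR
  by_contra! hcon
  have hgap (x : R) : N x = 0 ∨ c ≤ N x :=
    (hN.1.nonneg x).eq_or_lt.imp Eq.symm (hcon x)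
  obtain ⟨e, he, he0, hmin⟩ := hN.exists_minimal_idempotent hreg hc hgap
  have hMe : 0 < M e := (hM.nonneg e).lt_of_ne' fun h => he0 (hMfaithful e h)
  obtain ⟨f, hf⟩ : M e / 2 ∈ Set.range M := by
    rw [hrange]
    exact ⟨by positivity, by linarith [hM.le_one e]⟩
  have hf0 : f ≠ 0 := by
    rintro rfl
    rw [hM.map_zero] at hf
    linarith
  obtain ⟨u, v, huv⟩ := exists_mul_mul_eq_of_minimal_idempotent hreg he he0 hmin hf0
  have hle : M e ≤ M f := huv ▸ hM.mul_mul_le u f v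
  linarith

end SmallRank

/-! ### Towers of matricial subrings -/

namespace BlockMatrix

variable {J : Type*} {m : J → Type*} [∀ j, Fintype (m j)] [∀ j, DecidableEq (m j)]

/-- The entrywise map between products of matrix rings induced by a ring homomorphism. -/
def map (m : J → Type*) [∀ j, Fintype (m j)] [∀ j, DecidableEq (m j)] {R S : Type*} [Ring R]
    [Ring S] (f : R →+* S) : BlockMatrix m R →+* BlockMatrix m S :=
  RingHom.pi fun j => f.mapMatrix.comp (Pi.evalRingHom _ j)

@[simp]
lemma map_apply {R S : Type*} [Ring R] [Ring S] (f : R →+* S) (x : BlockMatrix m R) (j : J) :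
    map m f x j = (x j).map f := rfl

lemma map_minIdempotent [DecidableEq J] {R S : Type*} [Ring R] [Ring S] (f : R →+* S)
    (b : ∀ j, m j) (j : J) : map m f (minIdempotent R b j) = minIdempotent S b j := by
  funext k
  obtain rfl | hkj := eq_or_ne k j <;> simp [minIdempotent, *]

lemma map_blockIndicator [DecidableEq J] {R S : Type*} [Ring R] [Ring S] (f : R →+* S)
    (s : Finset J) : map m f (blockIndicator m R s) = blockIndicator m S s := by
  funext k
  by_cases hk : k ∈ s <;> simp [blockIndicator, hk]

lemma exists_minIdempotent_rank_le [Finite J] [DecidableEq J] {D : Type*} [DivisionRing D]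
    {N : BlockMatrix m D → ℝ} (hN : IsPseudoRankFunction N) (b : ∀ j, m j) {x : BlockMatrix m D}
    (hx : 0 < N x) : ∃ j, 0 < N (minIdempotent D b j) ∧ N (minIdempotent D b j) ≤ N x := by
  have := Fintype.ofFinite J
  have hentries : x = ∑ j, ∑ p, ∑ q, Pi.single j (Matrix.single p q (x j p q)) := by
    calc x = ∑ j, Pi.single j (x j) := (Finset.univ_sum_single x).symm
      _ = ∑ j, ∑ p, ∑ q, Pi.single j (Matrix.single p q (x j p q)) := by
        refine Finset.sum_congr rfl fun j _ => ?_
        conv_lhs => rw [Matrix.matrix_eq_sum_single (x j)]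
        exact (map_sum (AddMonoidHom.single (fun j => Matrix (m j) (m j) D) j) _ _).trans
          (Finset.sum_congr rfl fun p _ => map_sum (AddMonoidHom.single _ j) _ _)
  obtain ⟨j, p, q, hpq⟩ : ∃ j p q, 0 < N (Pi.single j (Matrix.single p q (x j p q))) := by
    by_contra! hcon
    refine hx.not_ge ?_
    rw [hentries]
    refine (hN.sum_le _ _).trans (Finset.sum_nonpos fun j _ => ?_)
    refine (hN.sum_le _ _).trans (Finset.sum_nonpos fun p _ => ?_)
    exact (hN.sum_le _ _).trans (Finset.sum_nonpos fun q _ => hcon j p q)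
  have hne : x j p q ≠ 0 := by
    intro h
    simp [h, hN.map_zero] at hpq
  refine ⟨j, hpq.trans_le ?_, ?_⟩
  · have hentry : (Pi.single j (Matrix.single p q (x j p q)) : BlockMatrix m D) =
        Pi.single j (Matrix.single p (b j) (x j p q)) * minIdempotent D b j *
          Pi.single j (Matrix.single (b j) q 1) := by
      simp [minIdempotent, ← Pi.single_mul]
    exact hentry ▸ hN.mul_mul_le _ _ _
  · have hidem : minIdempotent D b j = Pi.single j (Matrix.single (b j) p 1) * x *
        Pi.single j (Matrix.single q (b j) (x j p q)⁻¹) := by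
      funext k
      obtain rfl | hkj := eq_or_ne k j
      · simp [minIdempotent, Matrix.single_mul_mul_single, hne]
      · simp [minIdempotent, hkj]
    exact hidem ▸ hN.mul_mul_le _ _ _

end BlockMatrix

/-- A presentation of the `D`-ring `A`, with structure map `ι`, as the union of an increasing
sequence of matricial subrings. Stage `n` is the image of the product of the matrix rings of sizes
`size n j`, `j : Fin (blocks n + 1)`. -/
structure MatricialTower {D A : Type*} [DivisionRing D] [Ring A] (ι : D →+* A) where
  blocks : ℕ → ℕ
  size : ∀ n, Fin (blocks n + 1) → ℕ
  size_pos : ∀ n j, 0 < size n j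
  embed : ∀ n, BlockMatrix (fun j => Fin (size n j)) D →+* A
  embed_smul_one : ∀ n d, embed n (fun _ => d • 1) = ι d
  embed_injective : ∀ n, Function.Injective (embed n)
  monotone_range : Monotone fun n => (embed n).range
  exists_mem_range : ∀ a, ∃ n, a ∈ (embed n).range

lemma IsUltramatricialDRing.nonempty_matricialTower {D A : Type} [DivisionRing D] [Ring A]
    {ι : D →+* A} (hA : IsUltramatricialDRing D A ι) : Nonempty (MatricialTower ι) := by
  obtain ⟨C, hmono, hcover, hC⟩ := hA
  choose h k s hs e he using hC
  let emb (n : ℕ) := (C n).subtype.comp (e n).symm.toRingHom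
  have hrange (n : ℕ) : (emb n).range = C n := by
    ext a
    refine ⟨?_, fun ha => ⟨e n ⟨a, ha⟩, by simp [emb]⟩⟩
    rintro ⟨x, rfl⟩
    exact ((e n).symm x).2
  refine ⟨⟨k, s, hs, emb, fun n d => ?_, fun n => ?_, ?_, ?_⟩⟩
  · simp only [emb, RingHom.comp_apply, ← he n d]
    simp
  · exact Subtype.val_injective.comp (e n).symm.injective
  · simpa only [hrange] using monotone_nat_of_le_succ hmono
  · simpa only [hrange] using hcover

lemma MatricialTower.vnRegular {D A : Type*} [DivisionRing D] [Ring A] {ι : D →+* A}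
    (T : MatricialTower ι) : VNRegular A := by
  intro a
  obtain ⟨n, x, rfl⟩ := T.exists_mem_range a
  obtain ⟨y, hy⟩ := vnRegular_of_isSemisimpleRing (BlockMatrix (fun j => Fin (T.size n j)) D) x
  exact ⟨T.embed n y, by rw [← map_mul, ← map_mul, ← hy]⟩

namespace MatricialTower

variable {D A : Type*} [DivisionRing D] [Ring A] {ι : D →+* A} (T : MatricialTower ι)

/-- The index type of the matrices in block `j` of stage `n`. -/
abbrev Row (n : ℕ) (j : Fin (T.blocks n + 1)) : Type := Fin (T.size n j)

/-- The product of matrix rings over the centre of `D` with the block sizes of stage `n`. -/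
abbrev CentralStage (n : ℕ) : Type _ := BlockMatrix (T.Row n) (Subring.center D)

/-- The embedding of the matrices over the centre of `D`. -/
def centralEmbed (n : ℕ) : T.CentralStage n →+* A :=
  (T.embed n).comp (BlockMatrix.map _ (Subring.center D).subtype)

/-- The base point of the rows of each block, used to single out its minimal idempotent. -/
def basePoint (n : ℕ) (j : Fin (T.blocks n + 1)) : T.Row n j := ⟨0, T.size_pos n j⟩

lemma centralEmbed_injective (n : ℕ) : Function.Injective (T.centralEmbed n) := by
  refine (T.embed_injective n).comp fun x y hxy => funext fun j => ?_
  exact Matrix.map_injective Subtype.val_injective (congrFun hxy j)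

lemma commute_centralEmbed (n : ℕ) (d : D) (x : T.CentralStage n) :
    Commute (ι d) (T.centralEmbed n x) := by
  rw [← T.embed_smul_one n d]
  refine Commute.map (x := fun _ => d • 1) (funext fun j => ?_) (T.embed n)
  ext p q
  simp [Matrix.smul_one_eq_diagonal, (Subring.mem_center_iff.1 (x j p q).2 d)]

lemma mem_range_centralEmbed {n : ℕ} {a : A} (ha : a ∈ (T.embed n).range)
    (hcomm : ∀ d, Commute (ι d) a) : a ∈ (T.centralEmbed n).range := by
  obtain ⟨x, rfl⟩ := ha
  have hx (d : D) : Commute (fun _ => d • 1) x := T.embed_injective n (by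
    rw [map_mul, map_mul, T.embed_smul_one]
    exact hcomm d)
  have hcentral (j p q) : x j p q ∈ Subring.center D := Subring.mem_center_iff.2 fun d => by
    simpa [Matrix.smul_one_eq_diagonal] using congrFun (congrFun (congrFun (hx d) j) p) q
  exact ⟨fun j => Matrix.of fun p q => ⟨x j p q, hcentral j p q⟩, rfl⟩

lemma monotone_range_centralEmbed : Monotone fun n => (T.centralEmbed n).range := by
  rintro n k hnk _ ⟨x, rfl⟩
  exact T.mem_range_centralEmbed (T.monotone_range hnk ⟨_, rfl⟩)
    fun d => T.commute_centralEmbed n d x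

end MatricialTower

/-! ### Block weights and asymptotic independence -/

lemma sum_filter_exists_le {I J : Type*} [Fintype I] [Fintype J] {w : J → ℝ} (hw : ∀ j, 0 ≤ w j)
    (p : I → J → Prop) [∀ i, DecidablePred (p i)] [DecidablePred fun j => ∃ i, p i j] :
    ∑ j with ∃ i, p i j, w j ≤ ∑ i, ∑ j with p i j, w j := by
  simp only [Finset.sum_filter]
  rw [Finset.sum_comm]
  refine Finset.sum_le_sum fun j _ => ?_
  have hnonneg (i : I) : 0 ≤ if p i j then w j else 0 := by split_ifs <;> simp [hw]
  split_ifs with h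
  · obtain ⟨i, hi⟩ := h
    simpa [hi] using Finset.single_le_sum (fun i _ => hnonneg i) (Finset.mem_univ i)
  · exact Finset.sum_nonneg fun i _ => hnonneg i

namespace MatricialTower

variable {D A : Type*} [DivisionRing D] [Ring A] {ι : D →+* A} (T : MatricialTower ι)

/-- The minimal idempotent of block `j` of stage `n`, as an element of `A`. -/
def minIdem (n : ℕ) (j : Fin (T.blocks n + 1)) : A :=
  T.centralEmbed n (BlockMatrix.minIdempotent _ (T.basePoint n) j)

/-- The central idempotent of stage `n` supported on the blocks in `S`, as an element of `A`. -/
def blockIdem (n : ℕ) (S : Finset (Fin (T.blocks n + 1))) : A :=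
  T.centralEmbed n (BlockMatrix.blockIndicator (T.Row n) _ S)

/-- The rank of the identity of block `j` of stage `n`. -/
def blockWeight (N : A → ℝ) (n : ℕ) (j : Fin (T.blocks n + 1)) : ℝ :=
  T.size n j * N (T.minIdem n j)

/-- The matrix rank of the block `j` of `x` divided by the size of the block. -/
def normalizedRank {n : ℕ} (x : T.CentralStage n) (j : Fin (T.blocks n + 1)) : ℝ :=
  (x j).rank / T.size n j

variable {T} {N : A → ℝ} {n : ℕ}

lemma size_cast_pos (j : Fin (T.blocks n + 1)) : (0 : ℝ) < T.size n j :=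
  Nat.cast_pos.2 (T.size_pos n j)

lemma blockWeight_nonneg (hN : IsPseudoRankFunction N) (j : Fin (T.blocks n + 1)) :
    0 ≤ T.blockWeight N n j :=
  mul_nonneg (Nat.cast_nonneg _) (hN.nonneg _)

lemma normalizedRank_mul_blockWeight (x : T.CentralStage n) (j : Fin (T.blocks n + 1)) :
    T.normalizedRank x j * T.blockWeight N n j = (x j).rank * N (T.minIdem n j) := by
  rw [normalizedRank, blockWeight, ← mul_assoc, div_mul_cancel₀ _ (size_cast_pos j).ne']

lemma rank_blockIdem_mul (hN : IsPseudoRankFunction N) {x : T.CentralStage n}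
    (hx : IsIdempotentElem x) (S : Finset (Fin (T.blocks n + 1))) :
    N (T.blockIdem n S * T.centralEmbed n x) =
      ∑ j ∈ S, T.normalizedRank x j * T.blockWeight N n j := by
  simp only [normalizedRank_mul_blockWeight, blockIdem, ← map_mul]
  exact BlockMatrix.rank_blockIndicator_mul (hN.comp (T.centralEmbed n)) hx (T.basePoint n) S

lemma rank_centralEmbed (hN : IsPseudoRankFunction N) {x : T.CentralStage n}
    (hx : IsIdempotentElem x) :
    N (T.centralEmbed n x) = ∑ j, T.normalizedRank x j * T.blockWeight N n j := by
  simp only [normalizedRank_mul_blockWeight]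
  exact BlockMatrix.rank_eq_sum (hN.comp (T.centralEmbed n)) hx (T.basePoint n)

lemma rank_blockIdem (hN : IsPseudoRankFunction N) (S : Finset (Fin (T.blocks n + 1))) :
    N (T.blockIdem n S) = ∑ j ∈ S, T.blockWeight N n j := by
  have h := rank_blockIdem_mul hN (n := n) (T := T) IsIdempotentElem.one S
  simpa [normalizedRank, (T.size_pos n _).ne'] using h

lemma sum_blockWeight (hN : IsPseudoRankFunction N) : ∑ j, T.blockWeight N n j = 1 := by
  have h := rank_centralEmbed hN (n := n) (T := T) IsIdempotentElem.one
  simpa [normalizedRank, (T.size_pos n _).ne', hN.map_one] using h.symm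

variable (T N) in
/-- Multiplication by the central idempotents of late stages is asymptotically independent, with
respect to `N`, of every fixed element. -/
def AsymptoticallyIndependent : Prop :=
  ∀ a, ∀ ε > 0, ∀ᶠ n in Filter.atTop, ∀ S,
    |N (T.blockIdem n S * a) - N (T.blockIdem n S) * N a| < ε

lemma AsymptoticallyIndependent.of_isExtremal (hext : IsExtremalPseudoRankFunction N) :
    T.AsymptoticallyIndependent N := by
  intro a ε hε
  filter_upwards [hext.eventually_abs_sub_lt T.vnRegular T.monotone_range T.exists_mem_range a hε]
    with n hn S
  refine hn _ ⟨_, rfl⟩ ((BlockMatrix.isIdempotentElem_blockIndicator S).map (T.centralEmbed n)) ?_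
  rintro _ ⟨x, rfl⟩
  rw [blockIdem, centralEmbed, RingHom.comp_apply, BlockMatrix.map_blockIndicator]
  exact (BlockMatrix.commute_blockIndicator S x).map (T.embed n)

lemma AsymptoticallyIndependent.eventually_sum_blockWeight_lt
    (hT : T.AsymptoticallyIndependent N) (hN : IsPseudoRankFunction N) {a : A}
    (ha : IsIdempotentElem a) {δ ε : ℝ} (hδ : 0 < δ) (hε : 0 < ε) :
    ∀ᶠ n in Filter.atTop, ∀ x, T.centralEmbed n x = a →
      ∑ j with δ ≤ |T.normalizedRank x j - N a|, T.blockWeight N n j < ε := by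
  filter_upwards [hT a (δ * (ε / 2)) (by positivity)] with n hn x hx
  have hx' : IsIdempotentElem x := T.centralEmbed_injective n (by rw [map_mul, hx, ha])
  have hdev (S : Finset (Fin (T.blocks n + 1))) :
      |∑ j ∈ S, (T.normalizedRank x j - N a) * T.blockWeight N n j| < δ * (ε / 2) := by
    have h := hn S
    rw [← hx, rank_blockIdem_mul hN hx', rank_blockIdem hN, hx, Finset.sum_mul,
      ← Finset.sum_sub_distrib] at h
    simpa only [sub_mul, mul_comm (N a)] using h
  have htail {S : Finset (Fin (T.blocks n + 1))} {c : ℝ} (hc : |c| = 1)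
      (hS : ∀ j ∈ S, δ ≤ c * (T.normalizedRank x j - N a)) :
      ∑ j ∈ S, T.blockWeight N n j < ε / 2 := by
    refine lt_of_mul_lt_mul_left (a := δ) ?_ hδ.le
    calc δ * ∑ j ∈ S, T.blockWeight N n j
        ≤ c * ∑ j ∈ S, (T.normalizedRank x j - N a) * T.blockWeight N n j := by
          rw [Finset.mul_sum, Finset.mul_sum]
          refine Finset.sum_le_sum fun j hj => ?_
          rw [← mul_assoc]
          exact mul_le_mul_of_nonneg_right (hS j hj) (blockWeight_nonneg hN j)
      _ ≤ |∑ j ∈ S, (T.normalizedRank x j - N a) * T.blockWeight N n j| := by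
          rw [← one_mul |_|, ← hc, ← abs_mul]
          exact le_abs_self _
      _ < δ * (ε / 2) := hdev S
  let U : Finset (Fin (T.blocks n + 1)) := {j | δ ≤ T.normalizedRank x j - N a}
  let V : Finset (Fin (T.blocks n + 1)) := {j | δ ≤ -(T.normalizedRank x j - N a)}
  have hU : ∑ j ∈ U, T.blockWeight N n j < ε / 2 := htail (c := 1) (by simp) (by simp [U])
  have hV : ∑ j ∈ V, T.blockWeight N n j < ε / 2 := htail (c := -1) (by simp) (by simp [V])
  have hUV : 0 ≤ ∑ j ∈ U ∩ V, T.blockWeight N n j :=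
    Finset.sum_nonneg fun j _ => blockWeight_nonneg hN j
  simp only [le_abs, Finset.filter_or]
  linarith [Finset.sum_union_inter (s₁ := U) (s₂ := V) (f := T.blockWeight N n)]

lemma exists_minIdem_rank_lt (hN : IsPseudoRankFunction N)
    (hsmall : ∀ c > 0, ∃ a, 0 < N a ∧ N a < c) {c : ℝ} (hc : 0 < c) :
    ∃ (n : ℕ) (j : Fin (T.blocks n + 1)), 0 < N (T.minIdem n j) ∧ N (T.minIdem n j) < c := by
  obtain ⟨a, ha, hac⟩ := hsmall c hc
  obtain ⟨n, x, rfl⟩ := T.exists_mem_range a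
  obtain ⟨j, hj, hjx⟩ :=
    BlockMatrix.exists_minIdempotent_rank_le (hN.comp (T.embed n)) (T.basePoint n) ha
  rw [← BlockMatrix.map_minIdempotent (Subring.center D).subtype] at hj hjx
  exact ⟨n, j, hj, hjx.trans_lt hac⟩

lemma isIdempotentElem_minIdem (n : ℕ) (j : Fin (T.blocks n + 1)) :
    IsIdempotentElem (T.minIdem n j) := by
  rw [minIdem, IsIdempotentElem, ← map_mul]
  simp [BlockMatrix.minIdempotent, ← Pi.single_mul]

lemma le_abs_normalizedRank_sub {x : T.CentralStage n} {j : Fin (T.blocks n + 1)} {L : ℕ} {c : ℝ}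
    (hj : T.size n j < L) : min c (1 / L - c) ≤ |T.normalizedRank x j - c| := by
  have hs := size_cast_pos (T := T) j
  obtain hr | hr := (x j).rank.eq_zero_or_pos
  · rw [normalizedRank, hr, Nat.cast_zero, zero_div, zero_sub, abs_neg]
    exact (min_le_left _ _).trans (le_abs_self c)
  · have hrank : 1 / (L : ℝ) ≤ T.normalizedRank x j :=
      div_le_div₀ (Nat.cast_nonneg _) (Nat.one_le_cast.2 hr) hs (Nat.cast_le.2 hj.le)
    exact (min_le_right _ _).trans ((sub_le_sub_right hrank c).trans (le_abs_self _))

-- The normalized rank in a block of size less than `L` is `0` or at least `1 / L`, so it stays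
-- away from the rank of an idempotent of positive rank less than `1 / L`.
lemma AsymptoticallyIndependent.eventually_sum_small_blockWeight_lt
    (hT : T.AsymptoticallyIndependent N) (hN : IsPseudoRankFunction N)
    (hsmall : ∀ c > 0, ∃ a, 0 < N a ∧ N a < c) (L : ℕ) {ε : ℝ} (hε : 0 < ε) :
    ∀ᶠ n in Filter.atTop, ∑ j with (T.size n j : ℝ) < L, T.blockWeight N n j < ε := by
  obtain rfl | hL := L.eq_zero_or_pos
  · exact .of_forall fun n => by simpa [(size_cast_pos _).not_gt] using hε
  obtain ⟨k, i, hpos, hlt⟩ := exists_minIdem_rank_lt (T := T) hN hsmall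
    (c := 1 / L) (by positivity)
  have hδ : 0 < min (N (T.minIdem k i)) (1 / L - N (T.minIdem k i)) :=
    lt_min hpos (sub_pos.2 hlt)
  filter_upwards [Filter.eventually_ge_atTop k,
    hT.eventually_sum_blockWeight_lt hN (isIdempotentElem_minIdem k i) hδ hε] with n hkn hn
  obtain ⟨x, hx⟩ := T.monotone_range_centralEmbed hkn ⟨_, rfl⟩
  refine (Finset.sum_le_sum_of_subset_of_nonneg (fun j hj => ?_) fun j _ _ =>
    blockWeight_nonneg hN j).trans_lt (hn x hx)
  simp only [Finset.mem_filter, Finset.mem_univ, true_and] at hj ⊢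
  exact le_abs_normalizedRank_sub (Nat.cast_lt.1 hj)

lemma AsymptoticallyIndependent.eventually_sum_deficient_blockWeight_lt
    (hT : T.AsymptoticallyIndependent N) (hN : IsPseudoRankFunction N) {a : A}
    (ha : IsIdempotentElem a) {η ε : ℝ} (hη : 0 < η) (hε : 0 < ε) :
    ∀ᶠ n in Filter.atTop, ∀ x, T.centralEmbed n x = a →
      ∑ j with T.normalizedRank x j < (1 - η) * N a, T.blockWeight N n j < ε := by
  obtain hzero | hpos := (hN.nonneg a).eq_or_lt
  · refine .of_forall fun n x _ => ?_
    have hnonneg (j) : 0 ≤ T.normalizedRank x j := by unfold normalizedRank; positivity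
    simpa [← hzero, (hnonneg _).not_gt] using hε
  filter_upwards [hT.eventually_sum_blockWeight_lt hN ha (mul_pos hη hpos) hε] with n hn x hx
  refine (Finset.sum_le_sum_of_subset_of_nonneg (Finset.monotone_filter_right _ fun j _ hj => ?_)
    fun j _ _ => blockWeight_nonneg hN j).trans_lt (hn x hx)
  rw [abs_sub_comm]
  exact (by linarith : η * N a ≤ N a - T.normalizedRank x j).trans (le_abs_self _)

lemma AsymptoticallyIndependent.eventually_exists_good_blocks
    (hT : T.AsymptoticallyIndependent N) (hN : IsPseudoRankFunction N)
    (hsmall : ∀ c > 0, ∃ a, 0 < N a ∧ N a < c) {I : Type*} [Finite I] {f : I → A}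
    (hf : ∀ i, IsIdempotentElem (f i)) (L : ℕ) {η ε : ℝ} (hη : 0 < η) (hε : 0 < ε) :
    ∀ᶠ n in Filter.atTop, ∀ x : I → T.CentralStage n, (∀ i, T.centralEmbed n (x i) = f i) →
      ∃ G : Finset (Fin (T.blocks n + 1)),
        (∀ j ∈ G, L ≤ T.size n j ∧ ∀ i, (1 - η) * N (f i) ≤ T.normalizedRank (x i) j) ∧
        1 - ε < ∑ j ∈ G, T.blockWeight N n j := by
  classical
  have := Fintype.ofFinite I
  have hε' : 0 < ε / (Fintype.card I + 1) := by positivity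
  filter_upwards [Filter.eventually_all.2 fun i =>
      hT.eventually_sum_deficient_blockWeight_lt hN (hf i) hη hε',
    hT.eventually_sum_small_blockWeight_lt hN hsmall L hε'] with n hn hL x hx
  let value (o : Option I) (j : Fin (T.blocks n + 1)) : ℝ :=
    o.elim (T.size n j) fun i => T.normalizedRank (x i) j
  let bound (o : Option I) : ℝ := o.elim L fun i => (1 - η) * N (f i)
  refine ⟨({j | ¬ ∃ o, value o j < bound o} : Finset _), fun j hj => ?_, ?_⟩
  · simp only [Finset.mem_filter, Finset.mem_univ, true_and, not_exists, not_lt] at hj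
    exact ⟨Nat.cast_le.1 (hj none), fun i => hj (some i)⟩
  · have hbad : ∑ j with ∃ o, value o j < bound o, T.blockWeight N n j < ε := calc
      _ ≤ ∑ o, ∑ j with value o j < bound o, T.blockWeight N n j :=
        sum_filter_exists_le (blockWeight_nonneg hN) fun o j => value o j < bound o
      _ < ∑ _o : Option I, ε / (Fintype.card I + 1) :=
        Finset.sum_lt_sum_of_nonempty Finset.univ_nonempty fun o _ => by
          obtain _ | i := o
          · exact hL
          · exact hn i (x i) (hx i)
      _ = ε := by
        rw [Finset.sum_const, Finset.card_univ, Fintype.card_option, nsmul_eq_mul]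
        push_cast
        field_simp
    have htotal := Finset.sum_filter_add_sum_filter_not Finset.univ
      (fun j => ∃ o, value o j < bound o) (T.blockWeight N n)
    rw [sum_blockWeight hN] at htotal
    linarith

end MatricialTower

/-! ### Idempotents that fit approximately into finitely many given ones -/

lemma exists_nat_mul_near {M η s : ℝ} (hM : 0 < M) (hη : η ≤ 1) (hMs : M ≤ η * s) (hs : 0 ≤ s) :
    ∃ r : ℕ, M * r ≤ (1 - η) * s ∧ (1 - 2 * η) * s ≤ M * r := by
  have hfloor := Nat.floor_le (div_nonneg (mul_nonneg (sub_nonneg.2 hη) hs) hM.le)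
  have hfloor' := (Nat.sub_one_lt_floor ((1 - η) * s / M)).le
  rw [le_div_iff₀' hM] at hfloor
  rw [sub_le_iff_le_add, div_le_iff₀' hM] at hfloor'
  exact ⟨_, hfloor, by linarith⟩

namespace MatricialTower

variable {D A : Type*} [DivisionRing D] [Ring A] {ι : D →+* A} {T : MatricialTower ι} {N : A → ℝ}
  {m : ℕ}

lemma le_mul_rank_centralEmbed (hN : IsPseudoRankFunction N) {g : T.CentralStage m}
    (hg : IsIdempotentElem g) {M c : ℝ} (hM : 0 ≤ M) {G : Finset (Fin (T.blocks m + 1))}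
    (hle : ∀ j ∈ G, c * T.size m j ≤ M * (g j).rank) :
    c * ∑ j ∈ G, T.blockWeight N m j ≤ M * N (T.centralEmbed m g) := by
  rw [rank_centralEmbed hN hg, Finset.mul_sum, Finset.mul_sum]
  refine (Finset.sum_le_sum fun j hj => ?_).trans
    (Finset.sum_le_sum_of_subset_of_nonneg G.subset_univ fun j _ _ => ?_)
  · rw [normalizedRank, ← mul_assoc, mul_div_assoc']
    exact mul_le_mul_of_nonneg_right ((le_div_iff₀ (size_cast_pos j)).2 (hle j hj))
      (blockWeight_nonneg hN j)
  · exact mul_nonneg hM (mul_nonneg (by unfold normalizedRank; positivity)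
      (blockWeight_nonneg hN j))

lemma mul_rank_le_rank {x : T.CentralStage m} {j : Fin (T.blocks m + 1)} {p η M : ℝ} {l r : ℕ}
    (hp : 0 ≤ p) (hl : l ≤ M * p) (hr : M * r ≤ (1 - η) * T.size m j)
    (hx : (1 - η) * p ≤ T.normalizedRank x j) : l * r ≤ (x j).rank := by
  rw [normalizedRank, le_div_iff₀ (size_cast_pos j)] at hx
  have : (l * r : ℝ) ≤ (x j).rank := calc
    (l * r : ℝ) ≤ M * p * r := mul_le_mul_of_nonneg_right hl (Nat.cast_nonneg _)
    _ = p * (M * r) := by ring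
    _ ≤ p * ((1 - η) * T.size m j) := mul_le_mul_of_nonneg_left hr hp
    _ ≤ (x j).rank := by linarith
  exact_mod_cast this

lemma AsymptoticallyIndependent.exists_fitting_idempotent (hT : T.AsymptoticallyIndependent N)
    (hN : IsPseudoRankFunction N) (hsmall : ∀ c > 0, ∃ a, 0 < N a ∧ N a < c) {I : Type*} [Finite I]
    {f : I → A} (hf : ∀ i, IsIdempotentElem (f i)) {n : ℕ}
    (hfn : ∀ i, f i ∈ (T.centralEmbed n).range) {M : ℕ} (hM : 0 < M) {l : I → ℕ}
    (hl : ∀ i, l i ≤ M * N (f i)) {ε : ℝ} (hε : 0 < ε) :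
    ∃ m > n, ∃ (x : I → T.CentralStage m) (g : T.CentralStage m),
      (∀ i, T.centralEmbed m (x i) = f i) ∧ IsIdempotentElem g ∧
      (∀ i j, l i * (g j).rank ≤ (x i j).rank) ∧ (∀ j, M * (g j).rank ≤ T.size m j) ∧
      1 - ε < M * N (T.centralEmbed m g) := by
  obtain ⟨η, hη, hη'⟩ := exists_between (show 0 < min (ε / 3) (1 / 2) by positivity)
  obtain ⟨hηε, hη2⟩ := lt_min_iff.1 hη'
  have hM' : (0 : ℝ) < M := Nat.cast_pos.2 hM
  obtain ⟨L, hL⟩ := exists_nat_ge (M / η)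
  obtain ⟨m, hgood, hnm⟩ := ((hT.eventually_exists_good_blocks hN hsmall hf L hη hη).and
    (Filter.eventually_gt_atTop n)).exists
  choose x hx using fun i => T.monotone_range_centralEmbed hnm.le (hfn i)
  obtain ⟨G, hG, hweight⟩ := hgood x hx
  have hr (j : Fin (T.blocks m + 1)) : ∃ r : ℕ, M * (r : ℝ) ≤ (1 - η) * T.size m j ∧
      (j ∈ G → (1 - 2 * η) * T.size m j ≤ M * r) ∧ (j ∉ G → r = 0) := by
    have hs := size_cast_pos (T := T) j
    by_cases hj : j ∈ G
    · have hsize : M ≤ η * T.size m j := by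
        rw [← div_le_iff₀' hη]
        exact hL.trans (Nat.cast_le.2 (hG j hj).1)
      obtain ⟨r, hr, hr'⟩ := exists_nat_mul_near hM' (by linarith) hsize hs.le
      exact ⟨r, hr, fun _ => hr', fun h => absurd hj h⟩
    · exact ⟨0, by simpa using mul_nonneg (by linarith) hs.le, fun h => absurd h hj, fun _ => rfl⟩
  choose r hrM hrG hr0 using hr
  have hMr (j) : M * r j ≤ T.size m j := by
    have : (M * r j : ℝ) ≤ T.size m j := (hrM j).trans (by nlinarith [size_cast_pos (T := T) j])
    exact_mod_cast this
  obtain ⟨g, hg, hrank⟩ := BlockMatrix.exists_isIdempotentElem_rank_eq (Subring.center D)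
    (m := T.Row m) r fun j => by
      simpa using (Nat.le_mul_of_pos_left _ hM).trans (hMr j)
  refine ⟨m, hnm, x, g, hx, hg, fun i j => ?_, fun j => hrank j ▸ hMr j, ?_⟩
  · rw [hrank]
    by_cases hj : j ∈ G
    · exact mul_rank_le_rank (hN.nonneg _) (hl i) (hrM j) ((hG j hj).2 i)
    · simp [hr0 j hj]
  · have hbound := le_mul_rank_centralEmbed hN hg hM'.le (c := 1 - 2 * η)
      fun j hj => (hrank j).symm ▸ hrG j hj
    nlinarith

lemma exists_orthogonalCopies_sumElim {L L' : Type*} [Fintype L] [DecidableEq L] [Fintype L']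
    [DecidableEq L'] {g : T.CentralStage m} (hg : IsIdempotentElem g) {X Y : L → A}
    (h : OrthogonalCopies (fun _ => T.centralEmbed m g) X Y)
    (hX : ∀ i, X i ∈ (T.centralEmbed m).range) (hY : ∀ i, Y i ∈ (T.centralEmbed m).range)
    (hcard : ∀ j, (Fintype.card L + Fintype.card L') * (g j).rank ≤ T.size m j) :
    ∃ X' Y' : L' → A,
      OrthogonalCopies (fun _ => T.centralEmbed m g) (Sum.elim X X') (Sum.elim Y Y') ∧
      (∀ i, X' i ∈ (T.centralEmbed m).range) ∧ ∀ i, Y' i ∈ (T.centralEmbed m).range := by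
  choose x hx using hX
  choose y hy using hY
  obtain rfl : (fun i => T.centralEmbed m (x i)) = X := funext hx
  obtain rfl : (fun i => T.centralEmbed m (y i)) = Y := funext hy
  have hxy : OrthogonalCopies (fun _ => g) x y := .of_map (T.centralEmbed_injective m) h
  obtain ⟨x', y', hxy', hx', hy'⟩ := BlockMatrix.exists_orthogonalCopies_of_rank_le (L := L') hg
    hxy.isIdempotentElem_sum.one_sub (T.basePoint m) fun j => by
      have hle := BlockMatrix.card_le_rank_one_sub_add hxy j
      have hsize := hcard j
      rw [add_mul] at hsize
      rw [Fintype.card_fin] at hle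
      lia
  refine ⟨fun i => T.centralEmbed m (x' i), fun i => T.centralEmbed m (y' i), ?_,
    fun i => ⟨_, rfl⟩, fun i => ⟨_, rfl⟩⟩
  convert (hxy.sumElim hxy' hx' hy').map (T.centralEmbed m) using 1 <;> ext (i | i) <;> rfl

end MatricialTower

/-! ### Linear combinations of matrix units -/

section UnitSum

variable {D A P : Type*} [Ring D] [Ring A] [Fintype P]

/-- The additive map sending a matrix `X` over `D` to the combination `∑ ι (X p q) * F p q` of a
family `F` indexed like matrix units. -/
def unitSum (ι : D →+* A) (F : P → P → A) : Matrix P P D →+ A where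
  toFun X := ∑ p, ∑ q, ι (X p q) * F p q
  map_zero' := by simp
  map_add' X Y := by simp only [Matrix.add_apply, map_add, add_mul, Finset.sum_add_distrib]

variable {ι : D →+* A} {F : P → P → A}

lemma unitSum_apply (X : Matrix P P D) : unitSum ι F X = ∑ p, ∑ q, ι (X p q) * F p q := rfl

lemma mul_mem_range_unitSum (d : D) (p q : P) : ι d * F p q ∈ (unitSum ι F).range := by
  classical
  refine ⟨Matrix.single p q d, ?_⟩
  rw [unitSum_apply, Finset.sum_eq_single p, Finset.sum_eq_single q] <;>
    simp +contextual [Matrix.single_apply, eq_comm]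

lemma range_unitSum_le_of_forall_mem {B : AddSubgroup A} (h : ∀ d p q, ι d * F p q ∈ B) :
    (unitSum ι F).range ≤ B := by
  rintro _ ⟨X, rfl⟩
  exact sum_mem fun p _ => sum_mem fun q _ => h _ p q

lemma sum_mem_range_unitSum {L : Type*} [Fintype L] {α β : P → A} (hα : ∀ d s, Commute (ι d) (α s))
    {x y : L → A} {c : P → P → A} (hc : ∀ s t, c s t ∈ (unitSum ι fun k l => x k * y l).range) :
    ∑ s, ∑ t, α s * c s t * β t ∈
      (unitSum ι fun p q : P × L => α p.1 * x p.2 * (y q.2 * β q.1)).range := by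
  refine sum_mem fun s _ => sum_mem fun t _ => ?_
  obtain ⟨X, hX⟩ := hc s t
  simp only [← hX, unitSum_apply, Finset.mul_sum, Finset.sum_mul]
  refine sum_mem fun k _ => sum_mem fun l _ => ?_
  convert mul_mem_range_unitSum (ι := ι) (X k l) (s, k) (t, l) using 1
  simp only [← mul_assoc, (hα _ s).eq]

end UnitSum

/-! ### Refining matrix units -/

namespace IsMatrixUnits

variable {A S : Type*} [Ring A] [DecidableEq S] {E : S → S → A} {N : A → ℝ}

lemma rank_sub_sum_copies (hE : IsMatrixUnits E) (hN : IsPseudoRankFunction N) {s₀ : S}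
    {L : Type*} [Fintype L] [DecidableEq L] {g : A} {x y : L → A}
    (hxy : OrthogonalCopies (fun _ => g) x y) (hx : ∀ l, E s₀ s₀ * x l = x l)
    (hy : ∀ l, y l * E s₀ s₀ = y l) (s t : S) :
    N (E s t - ∑ l, E s s₀ * x l * (y l * E s₀ t)) ≤ N (E s₀ s₀) - Fintype.card L * N g := by
  have hfactor : E s t - ∑ l, E s s₀ * x l * (y l * E s₀ t) =
      E s s₀ * (E s₀ s₀ - ∑ l, x l * y l) * E s₀ t := by
    simp only [mul_sub, sub_mul, Finset.mul_sum, Finset.sum_mul, hE.mul_self, mul_assoc]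
  rw [hfactor]
  refine (hN.mul_mul_le _ _ _).trans (le_of_eq ?_)
  rw [hxy.rank_sub_sum hN (hE.mul_self s₀ s₀ s₀) hx hy]
  simp

lemma rank_sub_sum_le [Fintype S] (hE : IsMatrixUnits E) (hN : IsPseudoRankFunction N) (s₀ : S)
    (a : A) {c : S → S → A} {η : ℝ} (hc : ∀ s t, N (E s₀ s * a * E t s₀ - c s t) ≤ η) :
    N (a - ∑ s, ∑ t, E s s₀ * c s t * E s₀ t) ≤
      2 * N (1 - ∑ s, E s s) + Fintype.card S ^ 2 * η := by
  set e := ∑ s, E s s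
  have heae : e * a * e = ∑ s, ∑ t, E s s₀ * (E s₀ s * a * E t s₀) * E s₀ t := by
    simp only [e, Finset.sum_mul, Finset.mul_sum, ← mul_assoc, hE.mul_self]
    simp only [mul_assoc, hE.mul_self]
    exact Finset.sum_comm
  have hcorner : N (a - e * a * e) ≤ 2 * N (1 - e) := calc
    N (a - e * a * e) = N ((1 - e) * a + e * a * (1 - e)) := by congr 1; noncomm_ring
    _ ≤ N ((1 - e) * a) + N (e * a * (1 - e)) := hN.subadditive _ _
    _ ≤ 2 * N (1 - e) := by
      linarith [hN.mul_le_left (1 - e) a, hN.mul_le_right (e * a) (1 - e)]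
  have hsum : N (e * a * e - ∑ s, ∑ t, E s s₀ * c s t * E s₀ t) ≤ Fintype.card S ^ 2 * η := by
    simp only [heae, ← Finset.sum_sub_distrib, ← sub_mul, ← mul_sub]
    calc _ ≤ ∑ s, ∑ t, N (E s s₀ * (E s₀ s * a * E t s₀ - c s t) * E s₀ t) :=
          (hN.sum_le _ _).trans (Finset.sum_le_sum fun s _ => hN.sum_le _ _)
      _ ≤ ∑ _s : S, ∑ _t : S, η := Finset.sum_le_sum fun s _ => Finset.sum_le_sum fun t _ =>
          (hN.mul_mul_le _ _ _).trans (hc s t)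
      _ = Fintype.card S ^ 2 * η := by simp [sq, mul_assoc]
  exact (hN.sub_le_sub_add_sub _ _ _).trans (add_le_add hcorner hsum)

end IsMatrixUnits

/-- The idempotent `e` is decomposed into the copies `x p * y p` of the idempotents `f (π p)`, and
each `f i` contains the copies `u i l * v i l` of `g`. -/
structure NestedCopies {A I P : Type*} [Ring A] [DecidableEq P] [Fintype P] {L : I → Type*}
    [∀ i, DecidableEq (L i)] (e g : A) (f : I → A) (π : P → I) (x y : P → A)
    (u v : ∀ i, L i → A) : Prop where
  outer : OrthogonalCopies (f ∘ π) x y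
  sum_outer : ∑ p, x p * y p = e
  inner : ∀ i, OrthogonalCopies (fun _ => g) (u i) (v i)
  mul_inner : ∀ i l, f i * u i l = u i l
  inner_mul : ∀ i l, v i l * f i = v i l

namespace NestedCopies

variable {A I P : Type*} [Ring A] [DecidableEq P] [Fintype P] {L : I → Type*}
  [∀ i, DecidableEq (L i)] {e g : A} {f : I → A} {π : P → I} {x y : P → A} {u v : ∀ i, L i → A}

lemma orthogonalCopies (h : NestedCopies e g f π x y u v) :
    OrthogonalCopies (fun _ : Σ p, L (π p) => g) (fun l => x l.1 * u (π l.1) l.2)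
      (fun l => v (π l.1) l.2 * y l.1) :=
  h.outer.comp (fun p => h.inner (π p)) fun p => h.mul_inner (π p)

lemma corner_mul (h : NestedCopies e g f π x y u v) (l : Σ p, L (π p)) :
    e * (x l.1 * u (π l.1) l.2) = x l.1 * u (π l.1) l.2 := by
  rw [← h.sum_outer, ← mul_assoc, h.outer.sum_mul_left]

lemma mul_corner (h : NestedCopies e g f π x y u v) (l : Σ p, L (π p)) :
    v (π l.1) l.2 * y l.1 * e = v (π l.1) l.2 * y l.1 := by
  rw [← h.sum_outer, mul_assoc, h.outer.right_mul_sum]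

variable {D : Type*} [Ring D] [∀ i, Fintype (L i)] {ι : D →+* A} {N : A → ℝ}

lemma exists_rank_sub_le (h : NestedCopies e g f π x y u v) (hN : IsPseudoRankFunction N)
    (hcomm : ∀ d p, Commute (ι d) (x p)) {η : ℝ}
    (hη : ∀ i, N (f i - ∑ l, u i l * v i l) ≤ η) {c : A} (hc : e * c * e = c)
    (hscalar : ∀ p q, ∃ d, π p = π q ∧ y p * c * x q = ι d * f (π p) ∨ y p * c * x q = 0) :
    ∃ c' ∈ (unitSum ι fun k l : Σ p, L (π p) =>
        x k.1 * u (π k.1) k.2 * (v (π l.1) l.2 * y l.1)).range,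
      N (c - c') ≤ Fintype.card P ^ 2 * η := by
  have hterm (p q : P) : ∃ c' ∈ (unitSum ι fun k l : Σ p, L (π p) =>
        x k.1 * u (π k.1) k.2 * (v (π l.1) l.2 * y l.1)).range,
      N (x p * (y p * c * x q) * y q - c') ≤ η := by
    obtain ⟨d, ⟨hpq, hd⟩ | hzero⟩ := hscalar p q
    · refine ⟨x p * (ι d * ∑ l, u (π p) l * v (π p) l) * y q, ?_, ?_⟩
      · simp only [Finset.mul_sum, Finset.sum_mul]
        refine sum_mem fun l _ => ?_
        obtain ⟨l', hl'⟩ : ∃ l', v (π p) l * y q = v (π q) l' * y q := by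
          revert l
          rw [hpq]
          exact fun l _ => ⟨l, rfl⟩
        convert mul_mem_range_unitSum (ι := ι) d (⟨p, l⟩ : Σ p, L (π p)) ⟨q, l'⟩ using 1
        rw [← hl']
        simp only [← mul_assoc, (hcomm d p).eq]
      · rw [hd, ← sub_mul, ← mul_sub, ← mul_sub, ← mul_assoc]
        exact (hN.mul_mul_le _ _ _).trans (hη _)
    · refine ⟨0, zero_mem _, ?_⟩
      rw [hzero, mul_zero, zero_mul, sub_zero, hN.map_zero]
      exact (hN.nonneg _).trans (hη (π p))
  choose c' hmem hle using hterm
  refine ⟨∑ p, ∑ q, c' p q, sum_mem fun p _ => sum_mem fun q _ => hmem p q, ?_⟩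
  have hexpand : c = ∑ p, ∑ q, x p * (y p * c * x q) * y q := by
    conv_lhs => rw [← hc, ← h.sum_outer, Finset.sum_mul, Finset.sum_mul]
    simp only [Finset.mul_sum, mul_assoc]
  rw [hexpand, ← Finset.sum_sub_distrib]
  simp only [← Finset.sum_sub_distrib]
  calc _ ≤ ∑ p, ∑ q, N (x p * (y p * c * x q) * y q - c' p q) :=
        (hN.sum_le _ _).trans (Finset.sum_le_sum fun p _ => hN.sum_le _ _)
    _ ≤ ∑ _p : P, ∑ _q : P, η := Finset.sum_le_sum fun p _ => Finset.sum_le_sum fun q _ => hle p q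
    _ = Fintype.card P ^ 2 * η := by simp [sq, mul_assoc]

end NestedCopies

lemma OrthogonalCopies.rank_one_sub_sum {A I : Type*} [Ring A] [DecidableEq I] [Fintype I]
    {g : A} {X Y : I → A} {N : A → ℝ} (h : OrthogonalCopies (fun _ => g) X Y)
    (hN : IsPseudoRankFunction N) : N (1 - ∑ i, X i * Y i) = 1 - Fintype.card I * N g := by
  rw [hN.one_sub h.isIdempotentElem_sum, h.rank_sum hN]
  simp

/-- The matrix units of size `S × M` built from copies `X i * Y i` of one idempotent which are
indexed by `S × Λ` and `S × C`, along a bijection of `M` with `Λ ⊕ C`. The copies indexed by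
`S × C` are there only to bring the size to a prescribed value. -/
def paddedUnits {A S M Λ C : Type*} [Ring A] (Φ : M ≃ Λ ⊕ C) (X Y : S × Λ ⊕ S × C → A)
    (p q : S × M) : A :=
  X (Equiv.prodSumDistrib S Λ C (p.1, Φ p.2)) * Y (Equiv.prodSumDistrib S Λ C (q.1, Φ q.2))

lemma orthogonalCopies_paddedUnits {A S M Λ C : Type*} [Ring A] [DecidableEq S] [DecidableEq M]
    [DecidableEq Λ] [DecidableEq C] (Φ : M ≃ Λ ⊕ C) {g : A} {X Y : S × Λ ⊕ S × C → A}
    (h : OrthogonalCopies (fun _ => g) X Y) : OrthogonalCopies (fun _ : S × M => g)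
      (fun p => X (Equiv.prodSumDistrib S Λ C (p.1, Φ p.2)))
      fun p => Y (Equiv.prodSumDistrib S Λ C (p.1, Φ p.2)) :=
  h.reindex (((Equiv.refl S).prodCongr Φ).trans (Equiv.prodSumDistrib S Λ C)).injective

section PaddedUnits

variable {A S M Λ C : Type*} [Ring A] {Φ : M ≃ Λ ⊕ C} {X Y : S × Λ ⊕ S × C → A} [Fintype M]
  [Fintype Λ]

lemma range_unitSum_le_paddedUnits {D : Type*} [Ring D] [Fintype S] (ι : D →+* A) :
    (unitSum ι fun p q : S × Λ => X (.inl p) * Y (.inl q)).range ≤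
      (unitSum ι (paddedUnits Φ X Y)).range := by
  refine range_unitSum_le_of_forall_mem fun d p q => ?_
  convert mul_mem_range_unitSum (F := paddedUnits Φ X Y) d (p.1, Φ.symm (.inl p.2))
    (q.1, Φ.symm (.inl q.2)) using 1
  simp [paddedUnits]

lemma sum_paddedUnits [Fintype C] (s t : S) : ∑ z, paddedUnits Φ X Y (s, z) (t, z) =
    ∑ l, X (.inl (s, l)) * Y (.inl (t, l)) + ∑ c, X (.inr (s, c)) * Y (.inr (t, c)) :=
  (Φ.sum_comp fun w => X (Equiv.prodSumDistrib S Λ C (s, w)) *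
    Y (Equiv.prodSumDistrib S Λ C (t, w))).trans (Fintype.sum_sum_type _)

variable [DecidableEq S] [DecidableEq Λ] [DecidableEq C] {g : A}

lemma rank_sub_sum_paddedUnits_le [Fintype C] {N : A → ℝ} (hN : IsPseudoRankFunction N)
    (h : OrthogonalCopies (fun _ => g) X Y) (a : A) (s t : S) :
    N (a - ∑ z, paddedUnits Φ X Y (s, z) (t, z)) ≤
      N (a - ∑ l, X (.inl (s, l)) * Y (.inl (t, l))) + Fintype.card C * N g := by
  have hpad : N (∑ c, X (.inr (s, c)) * Y (.inr (t, c))) ≤ Fintype.card C * N g := calc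
    _ ≤ ∑ c, N (X (.inr (s, c)) * Y (.inr (t, c))) := hN.sum_le _ _
    _ ≤ ∑ _c : C, N g := Finset.sum_le_sum fun c _ => by
      rw [← h.left_mul, mul_assoc]
      exact (hN.mul_le_right _ _).trans (hN.mul_le_left _ _)
    _ = Fintype.card C * N g := by simp
  rw [sum_paddedUnits, ← sub_sub]
  exact (hN.sub_le _ _).trans (add_le_add_right hpad _)

end PaddedUnits

/-- The matrix units `F` of size `S × M` refine the matrix units `E` of size `S` up to rank `η`,
and their `D`-span contains the subset `B` up to rank `η`. -/
structure ApproxRefines {D A S M : Type*} [Ring D] [Ring A] [Fintype S] [Fintype M] (ι : D →+* A)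
    (N : A → ℝ) (B : Set A) (E : S → S → A) (F : S × M → S × M → A) (η : ℝ) : Prop where
  rank_sub_sum_le : ∀ s t, N (E s t - ∑ z, F (s, z) (t, z)) ≤ η
  exists_rank_sub_le : ∀ a ∈ B, ∃ a' ∈ (unitSum ι F).range, N (a - a') ≤ η

lemma ApproxRefines.mono {D A S M : Type*} [Ring D] [Ring A] [Fintype S] [Fintype M] {ι : D →+* A}
    {N : A → ℝ} {B : Set A} {E : S → S → A} {F : S × M → S × M → A} {η η' : ℝ}
    (h : ApproxRefines ι N B E F η) (hη : η ≤ η') : ApproxRefines ι N B E F η' where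
  rank_sub_sum_le s t := (h.rank_sub_sum_le s t).trans hη
  exists_rank_sub_le a ha := by
    obtain ⟨a', ha', haa'⟩ := h.exists_rank_sub_le a ha
    exact ⟨a', ha', haa'.trans hη⟩

/-- The left factors of the copies of `g` which matrix units `E` spread from the nested copies in
the corner `E s₀ s₀` to all the corners `E s s`. -/
def spreadLeft {A S I P : Type*} [Ring A] {L : I → Type*} (E : S → S → A) (s₀ : S) (π : P → I)
    (x : P → A) (u : ∀ i, L i → A) (p : S × Σ p, L (π p)) : A :=
  E p.1 s₀ * (x p.2.1 * u (π p.2.1) p.2.2)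

/-- The right factors of the copies whose left factors are given by `spreadLeft`. -/
def spreadRight {A S I P : Type*} [Ring A] {L : I → Type*} (E : S → S → A) (s₀ : S) (π : P → I)
    (y : P → A) (v : ∀ i, L i → A) (p : S × Σ p, L (π p)) : A :=
  v (π p.2.1) p.2.2 * y p.2.1 * E s₀ p.1

namespace NestedCopies

variable {A I P S : Type*} [Ring A] [DecidableEq P] [Fintype P] [DecidableEq S] {L : I → Type*}
  [∀ i, DecidableEq (L i)] {e g : A} {f : I → A} {π : P → I} {x y : P → A} {u v : ∀ i, L i → A}
  {E : S → S → A} {s₀ : S}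

lemma orthogonalCopies_spread (h : NestedCopies (E s₀ s₀) g f π x y u v) (hE : IsMatrixUnits E) :
    OrthogonalCopies (fun _ => g) (spreadLeft E s₀ π x u) (spreadRight E s₀ π y v) :=
  (hE.orthogonalCopies s₀).prod h.orthogonalCopies h.corner_mul

variable [∀ i, Fintype (L i)] {N : A → ℝ} {η : ℝ}

lemma rank_sub_card_mul_le (h : NestedCopies e g f π x y u v) (hN : IsPseudoRankFunction N)
    (hη : ∀ i, N (f i) - Fintype.card (L i) * N g ≤ η) :
    N e - Fintype.card (Σ p, L (π p)) * N g ≤ Fintype.card P * η := by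
  rw [← h.sum_outer, h.outer.rank_sum hN, Fintype.card_sigma, Nat.cast_sum, Finset.sum_mul,
    ← Finset.sum_sub_distrib]
  refine (Finset.sum_le_sum fun p _ => hη (π p)).trans_eq ?_
  simp

variable {M C : Type*} [Fintype S] [Fintype M] {X Y : S × C → A} {Φ : M ≃ (Σ p, L (π p)) ⊕ C}

lemma rank_sub_sum_paddedUnits_le [DecidableEq C] (h : NestedCopies (E s₀ s₀) g f π x y u v)
    (hN : IsPseudoRankFunction N) (hE : IsMatrixUnits E)
    (hη : ∀ i, N (f i) - Fintype.card (L i) * N g ≤ η)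
    (hXY : OrthogonalCopies (fun _ => g) (Sum.elim (spreadLeft E s₀ π x u) X)
      (Sum.elim (spreadRight E s₀ π y v) Y)) (s t : S) :
    N (E s t - ∑ z, paddedUnits Φ (Sum.elim (spreadLeft E s₀ π x u) X)
        (Sum.elim (spreadRight E s₀ π y v) Y) (s, z) (t, z)) ≤
      N (1 - ∑ s, E s s) + 2 * (Fintype.card P * η) := by
  classical
  have : Fintype C := .ofInjective _ (Φ.symm.injective.comp Sum.inr_injective)
  have hcopies := hE.rank_sub_sum_copies hN h.orthogonalCopies h.corner_mul h.mul_corner s t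
  have hpad := AraClaramunt.rank_sub_sum_paddedUnits_le (Φ := Φ) hN hXY (E s t) s t
  have hdefect := hE.card_mul_rank hN s₀
  have htotal : Fintype.card S * (Fintype.card M * N g) ≤ 1 := by
    have hrank := (orthogonalCopies_paddedUnits Φ hXY).rank_one_sub_sum hN
    have hnonneg := hrank ▸ hN.nonneg _
    rw [Fintype.card_prod] at hnonneg
    push_cast at hnonneg
    linarith
  have hM : Fintype.card M * N g ≤ N (E s₀ s₀) + N (1 - ∑ s, E s s) := by
    have hS : (1 : ℝ) ≤ Fintype.card S := Nat.one_le_cast.2 (Fintype.card_pos_iff.2 ⟨s₀⟩)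
    refine le_of_mul_le_mul_left ?_ (zero_lt_one.trans_le hS)
    nlinarith [hN.nonneg (1 - ∑ s, E s s)]
  have hcard : (Fintype.card M : ℝ) = Fintype.card (Σ p, L (π p)) + Fintype.card C := by
    rw [Fintype.card_congr Φ, Fintype.card_sum, Nat.cast_add]
  rw [hcard] at hM
  simp only [Sum.elim_inl, spreadLeft, spreadRight] at hpad
  linarith [h.rank_sub_card_mul_le hN hη]

variable {D : Type*} [Ring D] {ι : D →+* A}

lemma exists_mem_range_paddedUnits (h : NestedCopies (E s₀ s₀) g f π x y u v)
    (hN : IsPseudoRankFunction N) (hE : IsMatrixUnits E) (hf : ∀ i, IsIdempotentElem (f i))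
    (hη : ∀ i, N (f i) - Fintype.card (L i) * N g ≤ η) (hιE : ∀ d s t, Commute (ι d) (E s t))
    (hιx : ∀ d p, Commute (ι d) (x p)) {a : A}
    (ha : ∀ s t p q, ∃ d, π p = π q ∧
      y p * (E s₀ s * a * E t s₀) * x q = ι d * f (π p) ∨ y p * (E s₀ s * a * E t s₀) * x q = 0) :
    ∃ a' ∈ (unitSum ι (paddedUnits Φ (Sum.elim (spreadLeft E s₀ π x u) X)
        (Sum.elim (spreadRight E s₀ π y v) Y))).range,
      N (a - a') ≤
        2 * N (1 - ∑ s, E s s) + Fintype.card S ^ 2 * (Fintype.card P ^ 2 * η) := by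
  have hη' (i : I) : N (f i - ∑ l, u i l * v i l) ≤ η := by
    rw [(h.inner i).rank_sub_sum hN (hf i) (h.mul_inner i) (h.inner_mul i)]
    simpa using hη i
  have hcorner (s t : S) : E s₀ s₀ * (E s₀ s * a * E t s₀) * E s₀ s₀ = E s₀ s * a * E t s₀ := by
    rw [← mul_assoc, ← mul_assoc, hE.mul_self, mul_assoc, hE.mul_self]
  choose c hmem hc using fun s t =>
    h.exists_rank_sub_le (ι := ι) hN hιx hη' (hcorner s t) (ha s t)
  refine ⟨_, range_unitSum_le_paddedUnits ι ?_, hE.rank_sub_sum_le hN s₀ a hc⟩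
  convert sum_mem_range_unitSum (fun d s => hιE d s s₀) (β := fun t => E s₀ t) hmem using 5
  simp only [Sum.elim_inl, spreadLeft, spreadRight, mul_assoc]

end NestedCopies

namespace MatricialTower

variable {D A : Type*} [DivisionRing D] [Ring A] {ι : D →+* A} {T : MatricialTower ι} {N : A → ℝ}
  {n : ℕ}

lemma minIdem_mul_mul_minIdem {c : A} (hc : c ∈ (T.embed n).range)
    (i j : Fin (T.blocks n + 1)) : ∃ d, i = j ∧
      T.minIdem n i * c * T.minIdem n j = ι d * T.minIdem n i ∨
      T.minIdem n i * c * T.minIdem n j = 0 := by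
  obtain ⟨a, rfl⟩ := hc
  have hmul := congrArg (T.embed n)
    (BlockMatrix.minIdempotent_mul_mul_minIdempotent (T.basePoint n) i j a)
  have hminIdem (k) :
      T.embed n (BlockMatrix.minIdempotent D (T.basePoint n) k) = T.minIdem n k := by
    rw [minIdem, centralEmbed, RingHom.comp_apply, BlockMatrix.map_minIdempotent]
  rw [map_mul, map_mul, apply_ite (T.embed n), map_mul, map_zero, hminIdem, hminIdem,
    T.embed_smul_one] at hmul
  rw [hmul]
  split_ifs with hij
  · exact ⟨_, .inl ⟨hij, rfl⟩⟩
  · exact ⟨0, .inr rfl⟩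

lemma exists_orthogonalCopies_minIdem {e : A} (he : IsIdempotentElem e)
    (hen : e ∈ (T.centralEmbed n).range) :
    ∃ (r : Fin (T.blocks n + 1) → ℕ) (x y : (Σ j, Fin (r j)) → A),
      OrthogonalCopies (T.minIdem n ∘ Sigma.fst) x y ∧ ∑ p, x p * y p = e ∧
      (∀ p, x p ∈ (T.centralEmbed n).range) ∧ ∀ p, y p ∈ (T.centralEmbed n).range := by
  obtain ⟨e, rfl⟩ := hen
  have he' : IsIdempotentElem e := T.centralEmbed_injective n (by rw [map_mul, he.eq])
  obtain ⟨x, y, hxy, hsum⟩ :=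
    BlockMatrix.exists_orthogonalCopies_minIdempotent he' (T.basePoint n)
  refine ⟨fun j => (e j).rank, fun p => T.centralEmbed n (x p), fun p => T.centralEmbed n (y p),
    hxy.map _, ?_, fun p => ⟨_, rfl⟩, fun p => ⟨_, rfl⟩⟩
  simp only [← hsum, map_sum, map_mul]

lemma exists_orthogonalCopies_of_rank_le {m : ℕ} {L : Type*} [Fintype L] [DecidableEq L]
    {x g : T.CentralStage m} (hg : IsIdempotentElem g)
    (hx : IsIdempotentElem (T.centralEmbed m x))
    (hle : ∀ j, Fintype.card L * (g j).rank ≤ (x j).rank) :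
    ∃ u v : L → A, OrthogonalCopies (fun _ => T.centralEmbed m g) u v ∧
      (∀ l, T.centralEmbed m x * u l = u l) ∧ (∀ l, v l * T.centralEmbed m x = v l) ∧
      (∀ l, u l ∈ (T.centralEmbed m).range) ∧ ∀ l, v l ∈ (T.centralEmbed m).range := by
  have hx' : IsIdempotentElem x := T.centralEmbed_injective m (by rw [map_mul, hx.eq])
  obtain ⟨u, v, huv, hu, hv⟩ :=
    BlockMatrix.exists_orthogonalCopies_of_rank_le (L := L) hg hx' (T.basePoint m) hle
  exact ⟨_, _, huv.map _, fun l => by rw [← map_mul, hu], fun l => by rw [← map_mul, hv],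
    fun l => ⟨_, rfl⟩, fun l => ⟨_, rfl⟩⟩

lemma AsymptoticallyIndependent.exists_nestedCopies (hT : T.AsymptoticallyIndependent N)
    (hN : IsPseudoRankFunction N) (hsmall : ∀ c > 0, ∃ a, 0 < N a ∧ N a < c) {P : Type*}
    [DecidableEq P] [Fintype P] {π : P → Fin (T.blocks n + 1)} {x y : P → A}
    (hxy : OrthogonalCopies (T.minIdem n ∘ π) x y) {K : ℕ} (hK : 0 < K) {ε : ℝ} (hε : 0 < ε) :
    ∃ m > n, ∃ g : T.CentralStage m, IsIdempotentElem g ∧ (∀ j, K * (g j).rank ≤ T.size m j) ∧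
      1 - ε < K * N (T.centralEmbed m g) ∧
      ∃ u v : ∀ i, Fin ⌊K * N (T.minIdem n i)⌋₊ → A,
        NestedCopies (∑ p, x p * y p) (T.centralEmbed m g) (T.minIdem n) π x y u v ∧
        (∀ i l, u i l ∈ (T.centralEmbed m).range) ∧
        ∀ i l, v i l ∈ (T.centralEmbed m).range := by
  obtain ⟨m, hnm, z, g, hz, hg, hfit, hsize, hrank⟩ :=
    hT.exists_fitting_idempotent hN hsmall (isIdempotentElem_minIdem n) (fun i => ⟨_, rfl⟩) hK
      (fun i => Nat.floor_le (mul_nonneg (Nat.cast_nonneg K) (hN.nonneg (T.minIdem n i)))) hε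
  choose u v huv hzu hvz humem hvmem using fun i =>
    exists_orthogonalCopies_of_rank_le (L := Fin ⌊K * N (T.minIdem n i)⌋₊) hg
      (by rw [hz]; exact isIdempotentElem_minIdem n i) fun j => by
        rw [Fintype.card_fin]
        exact hfit i j
  simp only [hz] at hzu hvz
  exact ⟨m, hnm, g, hg, hsize, hrank, u, v, ⟨hxy, rfl, huv, hzu, hvz⟩, humem, hvmem⟩

end MatricialTower

lemma sub_floor_mul_le {p ν K δ : ℝ} (hp : p ≤ 1) (hν : 0 ≤ ν) (hKν : K * ν ≤ 1)
    (hδ : 1 - δ < K * ν) (hδK : 1 ≤ δ * K) : p - ⌊K * p⌋₊ * ν ≤ 2 * δ := by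
  have hfloor : K * p - 1 ≤ ⌊K * p⌋₊ := (Nat.sub_one_lt_floor _).le
  have hνδ : ν ≤ δ := by nlinarith
  calc p - ⌊K * p⌋₊ * ν ≤ p - (K * p - 1) * ν := by gcongr
    _ = p * (1 - K * ν) + ν := by ring
    _ ≤ 1 * δ + δ := add_le_add (mul_le_mul hp (by linarith) (sub_nonneg.2 hKν) zero_le_one) hνδ
    _ = 2 * δ := by ring

lemma NestedCopies.card_le {A I P : Type*} [Ring A] [DecidableEq P] [Fintype P] {e g : A}
    {f : I → A} {π : P → I} {x y : P → A} {N : A → ℝ} {σ M : ℕ}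
    {u v : ∀ i, Fin ⌊((σ * M : ℕ) : ℝ) * N (f i)⌋₊ → A} (h : NestedCopies e g f π x y u v)
    (hN : IsPseudoRankFunction N) (hσ : σ * N e ≤ 1) :
    Fintype.card (Σ p, Fin ⌊((σ * M : ℕ) : ℝ) * N (f (π p))⌋₊) ≤ M := by
  have hreal : (Fintype.card (Σ p, Fin ⌊((σ * M : ℕ) : ℝ) * N (f (π p))⌋₊) : ℝ) ≤ M := calc
    _ = ∑ p, (⌊((σ * M : ℕ) : ℝ) * N (f (π p))⌋₊ : ℝ) := by simp
    _ ≤ ∑ p, (σ * M : ℕ) * N (f (π p)) := Finset.sum_le_sum fun p _ =>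
      Nat.floor_le (mul_nonneg (Nat.cast_nonneg _) (hN.nonneg _))
    _ = M * (σ * N e) := by
      rw [← h.sum_outer, h.outer.rank_sum hN, ← Finset.mul_sum]
      push_cast [Function.comp_apply]
      ring
    _ ≤ M * 1 := by gcongr
    _ = M := mul_one _
  exact_mod_cast hreal

namespace MatricialTower

variable {D A : Type*} [DivisionRing D] [Ring A] {ι : D →+* A} {T : MatricialTower ι} {N : A → ℝ}
  {n m : ℕ} {S P : Type*} [DecidableEq S] [Fintype S] [DecidableEq P] [Fintype P] {E : S → S → A}
  {s₀ : S}

lemma exists_orthogonalCopies_pad_spread {I : Type*} {L : I → Type*} [∀ i, DecidableEq (L i)]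
    [∀ i, Fintype (L i)] {g : T.CentralStage m} {f : I → A} {π : P → I} {x y : P → A}
    {u v : ∀ i, L i → A} (h : NestedCopies (E s₀ s₀) (T.centralEmbed m g) f π x y u v)
    (hE : IsMatrixUnits E) (hg : IsIdempotentElem g)
    (hEm : ∀ s t, E s t ∈ (T.centralEmbed m).range) (hx : ∀ p, x p ∈ (T.centralEmbed m).range)
    (hy : ∀ p, y p ∈ (T.centralEmbed m).range) (hu : ∀ i l, u i l ∈ (T.centralEmbed m).range)
    (hv : ∀ i l, v i l ∈ (T.centralEmbed m).range) {M : ℕ}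
    (hM : Fintype.card (Σ p, L (π p)) ≤ M)
    (hsize : ∀ j, Fintype.card S * M * (g j).rank ≤ T.size m j) :
    ∃ (_ : Fin M ≃ (Σ p, L (π p)) ⊕ Fin (M - Fintype.card (Σ p, L (π p))))
      (X Y : S × Fin (M - Fintype.card (Σ p, L (π p))) → A),
      OrthogonalCopies (fun _ => T.centralEmbed m g) (Sum.elim (spreadLeft E s₀ π x u) X)
        (Sum.elim (spreadRight E s₀ π y v) Y) ∧
      (∀ i, Sum.elim (spreadLeft E s₀ π x u) X i ∈ (T.centralEmbed m).range) ∧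
      ∀ i, Sum.elim (spreadRight E s₀ π y v) Y i ∈ (T.centralEmbed m).range := by
  have hleft (p) : spreadLeft E s₀ π x u p ∈ (T.centralEmbed m).range :=
    mul_mem (hEm _ _) (mul_mem (hx _) (hu _ _))
  have hright (p) : spreadRight E s₀ π y v p ∈ (T.centralEmbed m).range :=
    mul_mem (mul_mem (hv _ _) (hy _)) (hEm _ _)
  obtain ⟨X, Y, hXY, hX, hY⟩ := exists_orthogonalCopies_sumElim
    (L' := S × Fin (M - Fintype.card (Σ p, L (π p)))) hg (h.orthogonalCopies_spread hE)
    hleft hright fun j => by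
      rw [Fintype.card_prod, Fintype.card_prod, Fintype.card_fin, ← mul_add,
        Nat.add_sub_cancel' hM]
      exact hsize j
  exact ⟨Fintype.equivOfCardEq (by simp [-Fintype.card_sigma, Nat.add_sub_cancel' hM]), X, Y, hXY,
    Sum.forall.2 ⟨hleft, hX⟩, Sum.forall.2 ⟨hright, hY⟩⟩

lemma approxRefines_paddedUnits {M C : Type*} [Fintype M] [DecidableEq C]
    {π : P → Fin (T.blocks n + 1)} {L : Fin (T.blocks n + 1) → Type*} [∀ i, DecidableEq (L i)]
    [∀ i, Fintype (L i)] {g : A} {x y : P → A} {u v : ∀ i, L i → A}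
    (h : NestedCopies (E s₀ s₀) g (T.minIdem n) π x y u v) (hN : IsPseudoRankFunction N)
    (hE : IsMatrixUnits E) (hEn : ∀ s t, E s t ∈ (T.centralEmbed n).range)
    (hx : ∀ p, x p ∈ (T.centralEmbed n).range) (hy : ∀ p, y p ∈ (T.centralEmbed n).range)
    {η : ℝ} (hη₀ : 0 ≤ η) (hη : ∀ i, N (T.minIdem n i) - Fintype.card (L i) * N g ≤ η)
    {X Y : S × C → A} (Φ : M ≃ (Σ p, L (π p)) ⊕ C)
    (hXY : OrthogonalCopies (fun _ => g) (Sum.elim (spreadLeft E s₀ π x u) X)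
      (Sum.elim (spreadRight E s₀ π y v) Y)) :
    ApproxRefines ι N (T.embed n).range E
      (paddedUnits Φ (Sum.elim (spreadLeft E s₀ π x u) X) (Sum.elim (spreadRight E s₀ π y v) Y))
      (2 * N (1 - ∑ s, E s s) +
        (2 * Fintype.card P + Fintype.card S ^ 2 * Fintype.card P ^ 2) * η) where
  rank_sub_sum_le s t := by
    have hle := h.rank_sub_sum_paddedUnits_le (Φ := Φ) hN hE hη hXY s t
    have hnonneg : 0 ≤ (Fintype.card S : ℝ) ^ 2 * Fintype.card P ^ 2 * η := by positivity
    linarith [hN.nonneg (1 - ∑ s, E s s)]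
  exists_rank_sub_le a ha := by
    have hcomm {b : A} (hb : b ∈ (T.centralEmbed n).range) (d : D) : Commute (ι d) b := by
      obtain ⟨b, rfl⟩ := hb
      exact T.commute_centralEmbed n d b
    have hle : (T.centralEmbed n).range ≤ (T.embed n).range := by
      rintro _ ⟨b, rfl⟩
      exact ⟨_, rfl⟩
    obtain ⟨a', ha', haa'⟩ := h.exists_mem_range_paddedUnits (ι := ι) (Φ := Φ) (X := X) (Y := Y)
      hN hE (isIdempotentElem_minIdem n) hη (fun d s t => hcomm (hEn s t) d)
      (fun d p => hcomm (hx p) d) (a := a) fun s t p q => by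
        have hmem := mul_mem (mul_mem (hle (hy p))
          (mul_mem (mul_mem (hle (hEn s₀ s)) ha) (hle (hEn t s₀)))) (hle (hx q))
        have hcorner := minIdem_mul_mul_minIdem hmem (π p) (π q)
        have hyp : T.minIdem n (π p) * y p = y p := h.outer.mul_right p
        have hxq : x q * T.minIdem n (π q) = x q := h.outer.left_mul q
        rwa [mul_assoc (y p), ← mul_assoc (T.minIdem n (π p)), hyp, mul_assoc, mul_assoc _ (x q),
          hxq, ← mul_assoc] at hcorner
    have hnonneg : 0 ≤ (Fintype.card P : ℝ) * η := by positivity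
    exact ⟨a', ha', by linarith⟩

lemma AsymptoticallyIndependent.exists_approxRefines [Nonempty S]
    (hT : T.AsymptoticallyIndependent N) (hN : IsPseudoRankFunction N)
    (hsmall : ∀ c > 0, ∃ a, 0 < N a ∧ N a < c) (hE : IsMatrixUnits E)
    (hEn : ∀ s t, E s t ∈ (T.centralEmbed n).range) {ε : ℝ} (hε : 0 < ε) :
    ∀ᶠ M : ℕ in Filter.atTop, ∀ ε' > 0, ∃ m > n, ∃ F : S × Fin M → S × Fin M → A,
      IsMatrixUnits F ∧ (∀ p q, F p q ∈ (T.centralEmbed m).range) ∧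
      N (1 - ∑ p, F p p) < ε' ∧
      ApproxRefines ι N (T.embed n).range E F (2 * N (1 - ∑ s, E s s) + ε) := by
  obtain ⟨s₀⟩ := ‹Nonempty S›
  obtain ⟨r, x, y, hxy, hsum, hx, hy⟩ :=
    T.exists_orthogonalCopies_minIdem (hE.mul_self s₀ s₀ s₀) (hEn s₀ s₀)
  obtain ⟨δ, hδ, hWδ⟩ := exists_pos_mul_lt hε (2 * (2 * Fintype.card (Σ j, Fin (r j)) +
    Fintype.card S ^ 2 * Fintype.card (Σ j, Fin (r j)) ^ 2 : ℝ))
  have hσ : (0 : ℝ) < Fintype.card S := Nat.cast_pos.2 (Fintype.card_pos_iff.2 ⟨s₀⟩)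
  have hlarge : ∀ᶠ M : ℕ in Filter.atTop, (1 : ℝ) ≤ δ * (Fintype.card S * M : ℕ) := by
    push_cast
    exact ((tendsto_natCast_atTop_atTop.const_mul_atTop hσ).const_mul_atTop
      hδ).eventually_ge_atTop 1
  filter_upwards [hlarge] with M hM ε' hε'
  have hK : 0 < Fintype.card S * M := Nat.pos_of_ne_zero fun h0 => by
    rw [h0] at hM
    norm_num at hM
  obtain ⟨m, hnm, g, hg, hsize, hrank, u, v, hnest, hu, hv⟩ :=
    hT.exists_nestedCopies hN hsmall hxy hK (lt_min hε' hδ)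
  rw [hsum] at hnest
  have hle := T.monotone_range_centralEmbed hnm.le
  have hcard := hnest.card_le hN ((hE.card_mul_rank hN s₀).trans_le
    (sub_le_self _ (hN.nonneg _)))
  obtain ⟨Φ, X, Y, hXY, hX, hY⟩ := exists_orthogonalCopies_pad_spread hnest hE hg
    (fun s t => hle (hEn s t)) (fun p => hle (hx p)) (fun p => hle (hy p)) hu hv hcard hsize
  have hunits := orthogonalCopies_paddedUnits Φ hXY
  have hdefect := hunits.rank_one_sub_sum hN
  rw [Fintype.card_prod, Fintype.card_fin] at hdefect
  have hη (i) := sub_floor_mul_le (hN.le_one (T.minIdem n i)) (hN.nonneg _)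
    (sub_nonneg.1 (hdefect ▸ hN.nonneg _)) (by linarith [min_le_right ε' δ]) hM
  refine ⟨m, hnm, _, hunits.isMatrixUnits, fun p q => mul_mem (hX _) (hY _), ?_, ?_⟩
  · rw [hdefect]
    linarith [min_le_left ε' δ]
  · refine (approxRefines_paddedUnits (η := 2 * δ) hnest hN hE hEn hx hy (by positivity)
      (fun i => by simpa only [Fintype.card_fin] using hη i) Φ hXY).mono ?_
    linarith

end MatricialTower

/-! ### Dyadic stages -/

namespace IsMatrixUnits

variable {R S : Type*} [Ring R] [DecidableEq S]

lemma reindex {S' : Type*} [DecidableEq S'] {E : S → S → R} (hE : IsMatrixUnits E) {φ : S' → S}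
    (hφ : Function.Injective φ) : IsMatrixUnits fun s t => E (φ s) (φ t) := by
  intro s t t' u
  rw [hE]
  simp only [hφ.eq_iff]

lemma sum_diagonal {M : Type*} [DecidableEq M] [Fintype M] {F : S × M → S × M → R}
    (hF : IsMatrixUnits F) : IsMatrixUnits fun s t => ∑ z, F (s, z) (t, z) := by
  intro s t t' u
  simp only [Finset.sum_mul_sum, hF _ _ _ _, Prod.mk.injEq]
  split_ifs with h <;> simp [h]

end IsMatrixUnits

/-- The bijection `(s, r) ↦ s + n * r`, along which `n × n` matrices are embedded block-diagonally
into `(n * b) × (n * b)` matrices. -/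
def blockEquiv (n b : ℕ) : Fin n × Fin b ≃ Fin (n * b) :=
  ((Equiv.prodComm _ _).trans finProdFinEquiv).trans (finCongr (mul_comm b n))

lemma coe_blockEquiv {n b : ℕ} (p : Fin n × Fin b) : (blockEquiv n b p : ℕ) = p.1 + n * p.2 := rfl

/-- The image of the matrix unit with indices `s`, `t` under the block-diagonal embedding of
`n × n` matrices into `(n * b) × (n * b)` matrices, when the latter are written in terms of `E`.
Families of matrix units of varying sizes are indexed by natural numbers to avoid casts. -/
def blockSum {R : Type*} [Ring R] (n b : ℕ) (E : ℕ → ℕ → R) (s t : ℕ) : R :=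
  ∑ r : Fin b, E (s + n * r) (t + n * r)

section BlockSum

variable {R : Type*} [Ring R] {n b : ℕ} {E : ℕ → ℕ → R}

lemma blockSum_one (s t : ℕ) : blockSum n 1 E s t = E s t := by simp [blockSum]

lemma blockSum_blockSum (c s t : ℕ) :
    blockSum n b (blockSum (n * b) c E) s t = blockSum n (b * c) E s t := by
  simp only [blockSum, ← (blockEquiv b c).sum_comp, Fintype.sum_prod_type, coe_blockEquiv, mul_add,
    add_assoc, mul_assoc]

lemma blockSum_sub (F : ℕ → ℕ → R) (s t : ℕ) :
    blockSum n b E s t - blockSum n b F s t = blockSum n b (E - F) s t :=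
  (Finset.sum_sub_distrib _ _).symm

lemma sum_blockSum : ∑ s : Fin n, blockSum n b E s s = ∑ p : Fin (n * b), E p p := by
  simp only [blockSum, ← (blockEquiv n b).sum_comp, Fintype.sum_prod_type, coe_blockEquiv]

lemma IsMatrixUnits.blockSum (hE : IsMatrixUnits fun p q : Fin (n * b) => E p q) :
    IsMatrixUnits fun s t : Fin n => blockSum n b E s t :=
  (hE.reindex (blockEquiv n b).injective).sum_diagonal

lemma IsPseudoRankFunction.blockSum_le {N : R → ℝ} (hN : IsPseudoRankFunction N) {C : ℝ}
    (hE : ∀ p q : Fin (n * b), N (E p q) ≤ C) (s t : Fin n) : N (blockSum n b E s t) ≤ b * C := by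
  refine (hN.sum_le _ _).trans ((Finset.sum_le_sum fun r _ =>
    hE (blockEquiv n b (s, r)) (blockEquiv n b (t, r))).trans_eq ?_)
  simp

end BlockSum

/-- The family `F` of size `n × b`, indexed by natural numbers along `blockEquiv`; indices beyond
`n * b` are read modulo `n * b`. -/
def flattenUnits {R : Type*} {n b : ℕ} [NeZero (n * b)] (F : Fin n × Fin b → Fin n × Fin b → R)
    (p q : ℕ) : R :=
  F ((blockEquiv n b).symm (Fin.ofNat _ p)) ((blockEquiv n b).symm (Fin.ofNat _ q))

section FlattenUnits

variable {R : Type*} {n b : ℕ} [NeZero (n * b)] {F : Fin n × Fin b → Fin n × Fin b → R}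

lemma flattenUnits_coe (p q : Fin (n * b)) :
    flattenUnits F p q = F ((blockEquiv n b).symm p) ((blockEquiv n b).symm q) := by
  simp [flattenUnits]

variable [Ring R]

lemma IsMatrixUnits.flattenUnits (hF : IsMatrixUnits F) :
    IsMatrixUnits fun p q : Fin (n * b) => flattenUnits F p q := by
  simp only [flattenUnits_coe]
  exact hF.reindex (blockEquiv n b).symm.injective

lemma sum_flattenUnits : ∑ p : Fin (n * b), flattenUnits F p p = ∑ p, F p p := by
  simp only [flattenUnits_coe]
  exact (blockEquiv n b).symm.sum_comp fun p => F p p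

lemma blockSum_flattenUnits (s t : Fin n) :
    blockSum n b (flattenUnits F) s t = ∑ z, F (s, z) (t, z) :=
  Finset.sum_congr rfl fun z _ => by
    simpa [coe_blockEquiv] using flattenUnits_coe (F := F) (blockEquiv n b (s, z))
      (blockEquiv n b (t, z))

lemma unitSum_flattenUnits {D : Type*} [Ring D] (ι : D →+* R)
    (X : Matrix (Fin n × Fin b) (Fin n × Fin b) D) :
    unitSum ι (fun p q : Fin (n * b) => flattenUnits F p q)
      (X.submatrix (blockEquiv n b).symm (blockEquiv n b).symm) = unitSum ι F X := by
  simp only [unitSum_apply, flattenUnits_coe, Matrix.submatrix_apply]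
  rw [(blockEquiv n b).symm.sum_comp fun p =>
    ∑ q, ι (X p ((blockEquiv n b).symm q)) * F p ((blockEquiv n b).symm q)]
  exact Finset.sum_congr rfl fun p _ =>
    (blockEquiv n b).symm.sum_comp fun q => ι (X p q) * F p q

end FlattenUnits

lemma two_pow_mul_two_pow_sub {κ k : ℕ} (h : κ ≤ k) : 2 ^ κ * 2 ^ (k - κ) = 2 ^ k := by
  rw [← pow_add, Nat.add_sub_cancel' h]

lemma blockSum_two_pow_blockSum {R : Type*} [Ring R] {κ k l : ℕ} (hκk : κ ≤ k) (hkl : k ≤ l)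
    (E : ℕ → ℕ → R) (s t : ℕ) :
    blockSum (2 ^ κ) (2 ^ (k - κ)) (blockSum (2 ^ k) (2 ^ (l - k)) E) s t =
      blockSum (2 ^ κ) (2 ^ (l - κ)) E s t := by
  rw [← two_pow_mul_two_pow_sub hκk, blockSum_blockSum, ← pow_add]
  congr 2
  lia

namespace MatricialTower

variable {D A : Type*} [DivisionRing D] [Ring A] {ι : D →+* A} {T : MatricialTower ι} {N : A → ℝ}

/-- Matrix units of size `2 ^ exponent` over the centre of `D` in the stage `level` of the tower,
whose diagonal sums to `1` up to a small rank. -/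
structure DyadicStage (T : MatricialTower ι) (N : A → ℝ) where
  exponent : ℕ
  level : ℕ
  unit : ℕ → ℕ → A
  isMatrixUnits : IsMatrixUnits fun s t : Fin (2 ^ exponent) => unit s t
  unit_mem : ∀ s t, unit s t ∈ (T.centralEmbed level).range
  rank_one_sub_sum_le : N (1 - ∑ s : Fin (2 ^ exponent), unit s s) ≤ (1 / 8) ^ exponent

/-- The stage `V` refines the matrix units of the stage `U`, and its matrix units span the stage
`U.level` of the tower, up to a small rank. -/
structure DyadicStage.Refines (U V : T.DyadicStage N) : Prop where
  exponent_lt : U.exponent < V.exponent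
  level_lt : U.level < V.level
  rank_sub_blockSum_le : ∀ s t : Fin (2 ^ U.exponent), N (U.unit s t -
    blockSum (2 ^ U.exponent) (2 ^ (V.exponent - U.exponent)) V.unit s t) ≤
      3 * (1 / 8) ^ U.exponent
  exists_rank_sub_le : ∀ a ∈ (T.embed U.level).range,
    ∃ X, N (a - unitSum ι (fun p q : Fin (2 ^ V.exponent) => V.unit p q) X) ≤
      3 * (1 / 8) ^ U.exponent

lemma AsymptoticallyIndependent.exists_refines (hT : T.AsymptoticallyIndependent N)
    (hN : IsPseudoRankFunction N) (hsmall : ∀ c > 0, ∃ a, 0 < N a ∧ N a < c)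
    (U : T.DyadicStage N) : ∃ V, U.Refines V := by
  have hpow : Filter.Tendsto (fun l : ℕ => 2 ^ l) Filter.atTop Filter.atTop :=
    tendsto_pow_atTop_atTop_of_one_lt one_lt_two
  obtain ⟨l, hrefine, hl⟩ := ((hpow.eventually (hT.exists_approxRefines hN hsmall U.isMatrixUnits
    (fun s t => U.unit_mem s t) (ε := (1 / 8) ^ U.exponent) (by positivity))).and
    (Filter.eventually_gt_atTop 0)).exists
  obtain ⟨m, hm, F, hF, hFm, hdefect, happrox⟩ :=
    hrefine ((1 / 8) ^ (U.exponent + l)) (by positivity)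
  have hη : 2 * N (1 - ∑ s : Fin (2 ^ U.exponent), U.unit s s) + (1 / 8) ^ U.exponent ≤
      3 * (1 / 8) ^ U.exponent := by linarith [U.rank_one_sub_sum_le]
  refine ⟨⟨U.exponent + l, m, flattenUnits F, ?_, fun p q => hFm _ _, ?_⟩,
    Nat.lt_add_of_pos_right hl, hm, fun s t => ?_, fun a ha => ?_⟩
  · rw [pow_add]
    exact hF.flattenUnits
  · rw [pow_add, sum_flattenUnits]
    exact hdefect.le
  · rw [Nat.add_sub_cancel_left, blockSum_flattenUnits]
    exact (happrox.rank_sub_sum_le s t).trans hη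
  · obtain ⟨_, ⟨X, rfl⟩, hX⟩ := happrox.exists_rank_sub_le a ha
    change ∃ X, N (a - unitSum ι (fun p q : Fin (2 ^ (U.exponent + l)) => flattenUnits F p q) X) ≤ _
    rw [pow_add]
    exact ⟨_, (unitSum_flattenUnits ι X).symm ▸ hX.trans hη⟩

lemma AsymptoticallyIndependent.exists_dyadicStages (hT : T.AsymptoticallyIndependent N)
    (hN : IsPseudoRankFunction N) (hsmall : ∀ c > 0, ∃ a, 0 < N a ∧ N a < c) :
    ∃ U : ℕ → T.DyadicStage N, ∀ j, (U j).Refines (U (j + 1)) := by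
  choose next hnext using hT.exists_refines hN hsmall
  let initial : T.DyadicStage N :=
    { exponent := 0
      level := 0
      unit := fun _ _ => 1
      isMatrixUnits := fun s t t' u => by simp [Fin.ext_iff]
      unit_mem := fun _ _ => one_mem _
      rank_one_sub_sum_le := by simp [hN.map_zero] }
  exact ⟨fun j => Nat.rec initial (fun _ => next) j, fun j => hnext _⟩

end MatricialTower

/-- A sequence of matrix units of sizes `2 ^ exponent j` which commute with `D`, are almost unital,
almost compatible with the block-diagonal embeddings, and whose `D`-spans come arbitrarily close
to every element. -/
structure ApproxDyadicUnits {D Q : Type*} [Ring D] [Ring Q] (β : D →+* Q) (N : Q → ℝ) where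
  exponent : ℕ → ℕ
  strictMono_exponent : StrictMono exponent
  unit : ℕ → ℕ → ℕ → Q
  isMatrixUnits : ∀ j, IsMatrixUnits fun s t : Fin (2 ^ exponent j) => unit j s t
  commute_unit : ∀ j d s t, Commute (β d) (unit j s t)
  rank_one_sub_sum_le : ∀ j,
    N (1 - ∑ s : Fin (2 ^ exponent j), unit j s s) ≤ (1 / 8) ^ exponent j
  rank_sub_blockSum_le : ∀ j, ∀ s t : Fin (2 ^ exponent j), N (unit j s t -
    blockSum (2 ^ exponent j) (2 ^ (exponent (j + 1) - exponent j)) (unit (j + 1)) s t) ≤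
      3 * (1 / 8) ^ exponent j
  exists_rank_sub_lt : ∀ x, ∀ ε > 0, ∃ᶠ j in Filter.atTop,
    ∃ X, N (x - unitSum β (fun s t : Fin (2 ^ exponent j) => unit j s t) X) < ε

lemma map_unitSum {D A Q P : Type*} [Ring D] [Ring A] [Ring Q] [Fintype P] (φ : A →+* Q)
    (ι : D →+* A) (F : P → P → A) (X : Matrix P P D) :
    φ (unitSum ι F X) = unitSum (φ.comp ι) (fun p q => φ (F p q)) X := by
  simp [unitSum_apply]

lemma MatricialTower.AsymptoticallyIndependent.nonempty_approxDyadicUnits {D A Q : Type*}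
    [DivisionRing D] [Ring A] [Ring Q] {ι : D →+* A} {T : MatricialTower ι} {N : A → ℝ}
    {NQ : Q → ℝ} {φ : A →+* Q} (hT : T.AsymptoticallyIndependent N)
    (hsmall : ∀ c > 0, ∃ a, 0 < N a ∧ N a < c) (hNQ : IsPseudoRankFunction NQ)
    (hφ : ∀ a, NQ (φ a) = N a) (hdense : RankDense NQ (Set.range φ)) :
    Nonempty (ApproxDyadicUnits (φ.comp ι) NQ) := by
  have hN : IsPseudoRankFunction N := (funext hφ : NQ ∘ φ = N) ▸ hNQ.comp φ
  obtain ⟨U, hU⟩ := hT.exists_dyadicStages hN hsmall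
  have hexp : StrictMono fun j => (U j).exponent :=
    strictMono_nat_of_lt_succ fun j => (hU j).exponent_lt
  have hlevel : StrictMono fun j => (U j).level :=
    strictMono_nat_of_lt_succ fun j => (hU j).level_lt
  refine ⟨⟨fun j => (U j).exponent, hexp, fun j s t => φ ((U j).unit s t),
    fun j s t t' u => ?_, fun j d s t => ?_, fun j => ?_, fun j s t => ?_, fun x ε hε => ?_⟩⟩
  · rw [← map_mul, (U j).isMatrixUnits s t t' u, apply_ite φ, map_zero]
  · obtain ⟨y, hy⟩ := (U j).unit_mem s t
    exact hy ▸ (T.commute_centralEmbed _ d y).map φ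
  · simpa [← hφ] using (U j).rank_one_sub_sum_le
  · simpa [← hφ, blockSum] using (hU j).rank_sub_blockSum_le s t
  · obtain ⟨_, ⟨a, rfl⟩, ha⟩ := hdense x (ε / 2) (by positivity)
    obtain ⟨m, hm⟩ := T.exists_mem_range a
    have hsmall : Filter.Tendsto (fun j => 3 * (1 / 8 : ℝ) ^ (U j).exponent) Filter.atTop
        (nhds 0) := by
      simpa using ((tendsto_pow_atTop_nhds_zero_of_lt_one (r := (1 / 8 : ℝ)) (by norm_num)
        (by norm_num)).comp hexp.tendsto_atTop).const_mul 3
    have hev : ∀ᶠ j in Filter.atTop, ∃ X, NQ (x - unitSum (φ.comp ι)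
        (fun s t : Fin (2 ^ (U (j + 1)).exponent) => φ ((U (j + 1)).unit s t)) X) < ε := by
      filter_upwards [Filter.eventually_ge_atTop m, hsmall.eventually_lt_const (half_pos hε)]
        with j hmj hj
      obtain ⟨X, hX⟩ := (hU j).exists_rank_sub_le a
        (T.monotone_range (hmj.trans hlevel.le_apply) hm)
      refine ⟨X, ?_⟩
      rw [← hφ, map_sub, map_unitSum] at hX
      linarith [hNQ.sub_le_sub_add_sub x (φ a) (unitSum (φ.comp ι)
        (fun s t : Fin (2 ^ (U (j + 1)).exponent) => φ ((U (j + 1)).unit s t)) X)]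
    exact ((Filter.tendsto_add_atTop_nat 1).frequently hev.frequently)

/-! ### Limits of matrix units -/

/-- The matrix ring over `D` spanned by matrix units which sum to `1` and commute with `D`. -/
def IsMatrixUnits.matrixHom {D Q P : Type*} [Ring D] [Ring Q] [DecidableEq P] [Fintype P]
    {G : P → P → Q} {β : D →+* Q} (hG : IsMatrixUnits G) (hsum : ∑ p, G p p = 1)
    (hβ : ∀ d p q, Commute (β d) (G p q)) : Matrix P P D →+* Q where
  __ := unitSum β G
  map_one' := by
    change unitSum β G 1 = 1
    simp [unitSum_apply, Matrix.one_apply, apply_ite β, ite_mul, hsum]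
  map_mul' X Y := by
    change unitSum β G (X * Y) = unitSum β G X * unitSum β G Y
    have hmul (p q q' r) : β (X p q) * G p q * (β (Y q' r) * G q' r) =
        if q = q' then β (X p q * Y q' r) * G p r else 0 := by
      rw [mul_assoc, ← mul_assoc (G p q), ← (hβ _ p q).eq, mul_assoc, hG, map_mul]
      split_ifs <;> simp [mul_assoc]
    calc unitSum β G (X * Y) = ∑ p, ∑ r, ∑ q, β (X p q * Y q r) * G p r := by
          simp only [unitSum_apply, Matrix.mul_apply, map_sum, Finset.sum_mul]
      _ = ∑ p, ∑ q, ∑ r, β (X p q * Y q r) * G p r :=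
          Finset.sum_congr rfl fun p _ => Finset.sum_comm
      _ = ∑ p, ∑ q, ∑ q', ∑ r, β (X p q) * G p q * (β (Y q' r) * G q' r) := by
          simp only [hmul, Finset.sum_ite_irrel, Finset.sum_const_zero, Finset.sum_ite_eq,
            Finset.mem_univ, if_true]
      _ = unitSum β G X * unitSum β G Y := by
          simp only [unitSum_apply, Finset.sum_mul]
          simp only [Finset.mul_sum]

section MatrixHom

variable {D Q P : Type*} [Ring D] [Ring Q] [DecidableEq P] [Fintype P] {G : P → P → Q}
  {β : D →+* Q} (hG : IsMatrixUnits G) (hsum : ∑ p, G p p = 1)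
  (hβ : ∀ d p q, Commute (β d) (G p q))

lemma matrixHom_apply (X : Matrix P P D) : hG.matrixHom hsum hβ X = unitSum β G X := rfl

lemma matrixHom_smul_one (d : D) : hG.matrixHom hsum hβ (d • 1) = β d := by
  simp [matrixHom_apply, unitSum_apply, Matrix.one_apply, apply_ite β, ite_mul, ← Finset.mul_sum,
    hsum]

lemma mul_matrixHom_mul (X : Matrix P P D) (p q r : P) :
    G r p * hG.matrixHom hsum hβ X * G q r = β (X p q) * G r r := by
  have hterm (p' q') : G r p * (β (X p' q') * G p' q') * G q r =
      if p = p' then if q' = q then β (X p' q') * G r r else 0 else 0 := by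
    rw [← mul_assoc, ← (hβ _ r p).eq, mul_assoc (β _), hG]
    split_ifs <;> simp [mul_assoc, hG _ _ _ _, *]
  simp [matrixHom_apply, unitSum_apply, Finset.mul_sum, Finset.sum_mul, hterm]

lemma matrixHom_injective (hβinj : Function.Injective β) :
    Function.Injective (hG.matrixHom hsum hβ) := by
  refine (injective_iff_map_eq_zero _).2 fun X hX => ?_
  ext p q
  refine hβinj ?_
  calc β (X p q) = ∑ r, β (X p q) * G r r := by rw [← Finset.mul_sum, hsum, mul_one]
    _ = ∑ r, G r p * hG.matrixHom hsum hβ X * G q r := by simp only [mul_matrixHom_mul]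
    _ = β 0 := by simp [hX]

end MatrixHom

lemma isMD_of_matrixUnits {D Q : Type} [DivisionRing D] [Ring Q] {β : D →+* Q} {N : Q → ℝ}
    (hN : IsRankFunction N) (hcomplete : RankComplete N) {G : ℕ → ℕ → ℕ → Q}
    (hG : ∀ κ, IsMatrixUnits fun s t : Fin (2 ^ κ) => G κ s t)
    (hsum : ∀ κ, ∑ s : Fin (2 ^ κ), G κ s s = 1)
    (hβ : ∀ κ d, ∀ s t : Fin (2 ^ κ), Commute (β d) (G κ s t))
    (hsucc : ∀ κ, ∀ s t : Fin (2 ^ κ), G κ s t = blockSum (2 ^ κ) 2 (G (κ + 1)) s t)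
    (hdense : ∀ x, ∀ ε > 0, ∃ κ X,
      N (x - unitSum β (fun s t : Fin (2 ^ κ) => G κ s t) X) < ε) :
    IsMD D Q β N := by
  have : Nontrivial Q := ⟨1, 0, fun h => by simpa [h, hN.1.map_zero] using hN.1.map_one⟩
  let H (κ : ℕ) := (hG κ).matrixHom (hsum κ) (hβ κ)
  have hβmem (κ : ℕ) (d : D) : β d ∈ (H κ).range := ⟨_, matrixHom_smul_one (hG κ) _ _ d⟩
  have hGmem (κ : ℕ) (s t : Fin (2 ^ κ)) : G κ s t ∈ (H κ).range := by
    obtain ⟨X, hX⟩ := mul_mem_range_unitSum (ι := β)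
      (F := fun s t : Fin (2 ^ κ) => G κ s t) 1 s t
    exact ⟨X, hX.trans (by rw [map_one, one_mul])⟩
  refine ⟨hN, hcomplete, fun κ => (H κ).range, ?_, fun x ε hε => ?_, fun κ => ⟨hβmem κ, ?_⟩⟩
  · rintro κ _ ⟨X, rfl⟩
    rw [matrixHom_apply, unitSum_apply]
    refine sum_mem fun s _ => sum_mem fun t _ => mul_mem (hβmem _ _) ?_
    rw [hsucc, blockSum]
    refine sum_mem fun r _ => ?_
    exact hGmem (κ + 1) (blockEquiv (2 ^ κ) 2 (s, r)) (blockEquiv (2 ^ κ) 2 (t, r))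
  · obtain ⟨κ, X, hX⟩ := hdense x ε hε
    exact ⟨H κ X, Set.mem_iUnion.2 ⟨κ, X, rfl⟩, hX⟩
  · have hinj : Function.Injective (H κ).rangeRestrict := fun X Y h =>
      matrixHom_injective (hG κ) _ _ β.injective (congrArg Subtype.val h)
    refine ⟨(RingEquiv.ofBijective _ ⟨hinj, (H κ).rangeRestrict_surjective⟩).symm, fun d => ?_⟩
    rw [RingEquiv.symm_apply_eq]
    exact Subtype.ext (matrixHom_smul_one (hG κ) _ _ d).symm

/-- The metric `d(x, y) = N (x - y)` of a rank function `N`. -/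
abbrev IsRankFunction.normedAddCommGroup {Q : Type*} [Ring Q] {N : Q → ℝ} (hN : IsRankFunction N) :
    NormedAddCommGroup Q :=
  AddGroupNorm.toNormedAddCommGroup
    { hN.1.toAddGroupSeminorm with eq_zero_of_map_eq_zero' := hN.2 }

lemma IsRankFunction.continuousMul {Q : Type*} [Ring Q] {N : Q → ℝ} (hN : IsRankFunction N) :
    letI := hN.normedAddCommGroup
    ContinuousMul Q := by
  let := hN.normedAddCommGroup
  have hdist (x y : Q) : dist x y = N (x - y) := dist_eq_norm x y
  refine ⟨(LipschitzWith.of_dist_le_mul (K := 2) fun p q => ?_).continuous⟩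
  have hmul : p.1 * p.2 - q.1 * q.2 = (p.1 - q.1) * p.2 + q.1 * (p.2 - q.2) := by noncomm_ring
  calc dist (p.1 * p.2) (q.1 * q.2) ≤ N ((p.1 - q.1) * p.2) + N (q.1 * (p.2 - q.2)) := by
        rw [hdist, hmul]
        exact hN.1.subadditive _ _
    _ ≤ dist p.1 q.1 + dist p.2 q.2 := by
        rw [hdist, hdist]
        exact add_le_add (hN.1.mul_le_left _ _) (hN.1.mul_le_right _ _)
    _ ≤ 2 * dist p q := by
        rw [two_mul]
        exact add_le_add (le_max_left _ _) (le_max_right _ _)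

lemma RankComplete.completeSpace {Q : Type*} [Ring Q] {N : Q → ℝ} (hc : RankComplete N)
    (hN : IsRankFunction N) :
    letI := hN.normedAddCommGroup
    CompleteSpace Q := by
  let := hN.normedAddCommGroup
  have hdist (x y : Q) : dist x y = N (x - y) := dist_eq_norm x y
  refine Metric.complete_of_cauchySeq_tendsto fun u hu => ?_
  obtain ⟨x, hx⟩ := hc u fun ε hε => by
    obtain ⟨n₀, hn₀⟩ := Metric.cauchySeq_iff.1 hu ε hε
    exact ⟨n₀, fun m n hm hn => hdist (u m) (u n) ▸ hn₀ m hm n hn⟩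
  refine ⟨x, Metric.tendsto_atTop.2 fun ε hε => ?_⟩
  simpa only [hdist] using hx ε hε

lemma IsMatrixUnits.of_tendsto {Q S α : Type*} [Ring Q] [TopologicalSpace Q] [ContinuousMul Q]
    [T2Space Q] [DecidableEq S] {l : Filter α} [l.NeBot] {E : α → S → S → Q} {G : S → S → Q}
    (hE : ∀ᶠ j in l, IsMatrixUnits (E j))
    (hG : ∀ s t, Filter.Tendsto (fun j => E j s t) l (nhds (G s t))) : IsMatrixUnits G := by
  intro s t t' u
  refine tendsto_nhds_unique_of_eventuallyEq ((hG s t).mul (hG t' u))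
    (g := fun j => if t = t' then E j s u else 0) ?_ (hE.mono fun j hj => hj s t t' u)
  split_ifs
  · exact hG s u
  · exact tendsto_const_nhds

lemma two_pow_sub_mul_le {κ k j : ℕ} (hκ : κ ≤ k) (hj : j ≤ k) :
    (2 : ℝ) ^ (k - κ) * (3 * (1 / 8) ^ k) ≤ 3 * (1 / 4) ^ κ * (1 / 2) ^ j := by
  obtain ⟨i, rfl⟩ := Nat.exists_eq_add_of_le hκ
  calc (2 : ℝ) ^ (κ + i - κ) * (3 * (1 / 8) ^ (κ + i))
      = 3 * ((1 / 4) ^ κ * (1 / 2) ^ κ) * (1 / 4) ^ i := by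
        rw [Nat.add_sub_cancel_left, ← mul_pow, show (1 / 4 : ℝ) * (1 / 2) = 1 / 8 by norm_num,
          show (1 / 4 : ℝ) ^ i = 2 ^ i * (1 / 8) ^ i by rw [← mul_pow]; norm_num]
        ring
    _ ≤ 3 * ((1 / 4) ^ κ * (1 / 2) ^ κ) * (1 / 2) ^ i := by gcongr; norm_num
    _ = 3 * (1 / 4) ^ κ * (1 / 2) ^ (κ + i) := by ring
    _ ≤ 3 * (1 / 4) ^ κ * (1 / 2) ^ j := by
        gcongr ?_ * ?_
        exact pow_le_pow_of_le_one (by norm_num) (by norm_num) hj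

/-- The `j`-th approximate matrix units coarsened to size `2 ^ κ`; meaningful for
`κ ≤ U.exponent j`. -/
def ApproxDyadicUnits.coarse {D Q : Type*} [Ring D] [Ring Q] {β : D →+* Q} {N : Q → ℝ}
    (U : ApproxDyadicUnits β N) (κ j s t : ℕ) : Q :=
  blockSum (2 ^ κ) (2 ^ (U.exponent j - κ)) (U.unit j) s t

namespace ApproxDyadicUnits

section Coarse

variable {D Q : Type*} [Ring D] [Ring Q] {β : D →+* Q} {N : Q → ℝ} (U : ApproxDyadicUnits β N)

lemma coarse_exponent (j s t : ℕ) : U.coarse (U.exponent j) j s t = U.unit j s t := by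
  rw [coarse, Nat.sub_self, pow_zero, blockSum_one]

lemma coarse_eq_blockSum {κ j : ℕ} (h : κ + 1 ≤ U.exponent j) (s t : Fin (2 ^ κ)) :
    U.coarse κ j s t = blockSum (2 ^ κ) 2 (U.coarse (κ + 1) j) s t := by
  have := blockSum_two_pow_blockSum κ.le_succ h (U.unit j) s t
  rw [Nat.succ_eq_add_one, Nat.add_sub_cancel_left, pow_one] at this
  exact this.symm

lemma isMatrixUnits_coarse {κ j : ℕ} (h : κ ≤ U.exponent j) :
    IsMatrixUnits fun s t : Fin (2 ^ κ) => U.coarse κ j s t := by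
  refine IsMatrixUnits.blockSum ?_
  rw [two_pow_mul_two_pow_sub h]
  exact U.isMatrixUnits j

lemma commute_coarse (d : D) (κ j s t : ℕ) : Commute (β d) (U.coarse κ j s t) := by
  rw [coarse, blockSum]
  exact Commute.sum_right _ _ _ fun _ _ => U.commute_unit j d _ _

lemma rank_one_sub_sum_coarse_le {κ j : ℕ} (h : κ ≤ U.exponent j) :
    N (1 - ∑ s : Fin (2 ^ κ), U.coarse κ j s s) ≤ (1 / 8) ^ U.exponent j := by
  simp only [coarse]
  rw [sum_blockSum, two_pow_mul_two_pow_sub h]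
  exact U.rank_one_sub_sum_le j

lemma rank_coarse_sub_succ_le (hN : IsPseudoRankFunction N) {κ j : ℕ} (h : κ ≤ U.exponent j)
    (s t : Fin (2 ^ κ)) :
    N (U.coarse κ j s t - U.coarse κ (j + 1) s t) ≤ 3 * (1 / 4) ^ κ * (1 / 2) ^ j := by
  rw [coarse, coarse, ← blockSum_two_pow_blockSum h (U.strictMono_exponent j.lt_succ_self).le,
    blockSum_sub]
  refine (hN.blockSum_le (C := 3 * (1 / 8) ^ U.exponent j) ?_ s t).trans ?_
  · rw [two_pow_mul_two_pow_sub h]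
    exact U.rank_sub_blockSum_le j
  · exact_mod_cast two_pow_sub_mul_le h (U.strictMono_exponent.le_apply)

end Coarse

section Limit

variable {D Q : Type*} [Ring D] [Ring Q] {β : D →+* Q} {N : Q → ℝ} (U : ApproxDyadicUnits β N)

lemma exists_tendsto_coarse (hN : IsRankFunction N) (hcomplete : RankComplete N) :
    letI := hN.normedAddCommGroup
    ∃ G : ℕ → ℕ → ℕ → Q, ∀ κ, ∀ s t : Fin (2 ^ κ),
      Filter.Tendsto (fun j => U.coarse κ j s t) Filter.atTop (nhds (G κ s t)) ∧
      ∀ j, κ ≤ U.exponent j →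
        N (U.coarse κ j s t - G κ s t) ≤ 6 * (1 / 4) ^ κ * (1 / 2) ^ j := by
  let := hN.normedAddCommGroup
  have := hcomplete.completeSpace hN
  have hdist (x y : Q) : dist x y = N (x - y) := dist_eq_norm x y
  have hstep (κ j : ℕ) (h : κ ≤ U.exponent j) (s t : Fin (2 ^ κ)) (n : ℕ) :
      dist (U.coarse κ (n + j) s t) (U.coarse κ (n + 1 + j) s t) ≤
        6 * (1 / 4) ^ κ * (1 / 2) ^ j / 2 / 2 ^ n := by
    have hexp : κ ≤ U.exponent (n + j) := h.trans (U.strictMono_exponent.monotone (by lia))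
    rw [hdist, add_right_comm]
    refine (U.rank_coarse_sub_succ_le hN.1 hexp s t).trans_eq ?_
    rw [pow_add, one_div_pow 2 n]
    ring
  have htendsto (κ : ℕ) (s t : Fin (2 ^ κ)) : Filter.Tendsto (fun j => U.coarse κ j s t)
      Filter.atTop (nhds (Filter.limUnder Filter.atTop fun j => U.coarse κ j s t)) :=
    ((cauchySeq_shift κ).1 <| cauchySeq_of_le_geometric_two
      (hstep κ κ U.strictMono_exponent.le_apply s t)).tendsto_limUnder
  refine ⟨fun κ s t => Filter.limUnder Filter.atTop fun j => U.coarse κ j s t,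
    fun κ s t => ⟨htendsto κ s t, fun j h => ?_⟩⟩
  simpa [hdist] using dist_le_of_le_geometric_two_of_tendsto₀ (hstep κ j h s t)
    ((Filter.tendsto_add_atTop_iff_nat j).2 (htendsto κ s t))

lemma eventually_le_exponent (κ : ℕ) : ∀ᶠ j in Filter.atTop, κ ≤ U.exponent j :=
  U.strictMono_exponent.tendsto_atTop.eventually_ge_atTop κ

lemma sum_eq_one_of_tendsto_coarse (hN : IsRankFunction N) {κ : ℕ} {G : ℕ → ℕ → Q} :
    letI := hN.normedAddCommGroup
    (∀ s : Fin (2 ^ κ), Filter.Tendsto (fun j => U.coarse κ j s s) Filter.atTop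
      (nhds (G s s))) → ∑ s : Fin (2 ^ κ), G s s = 1 := by
  let := hN.normedAddCommGroup
  intro hG
  refine tendsto_nhds_unique (tendsto_finsetSum _ fun s _ => hG s) ?_
  rw [tendsto_iff_dist_tendsto_zero]
  refine squeeze_zero' (.of_forall fun _ => dist_nonneg) ?_
    ((tendsto_pow_atTop_nhds_zero_of_lt_one (r := (1 / 8 : ℝ)) (by norm_num)
        (by norm_num)).comp U.strictMono_exponent.tendsto_atTop)
  filter_upwards [U.eventually_le_exponent κ] with j hj
  rw [dist_comm, dist_eq_norm]
  exact U.rank_one_sub_sum_coarse_le hj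

lemma exists_rank_sub_unitSum_lt (hN : IsPseudoRankFunction N) {G : ℕ → ℕ → ℕ → Q}
    (hG : ∀ j, ∀ s t : Fin (2 ^ U.exponent j), N (U.unit j s t - G (U.exponent j) s t) ≤
      6 * (1 / 4) ^ U.exponent j * (1 / 2) ^ j) (x : Q) {ε : ℝ} (hε : 0 < ε) :
    ∃ κ X, N (x - unitSum β (fun s t : Fin (2 ^ κ) => G κ s t) X) < ε := by
  have hzero : Filter.Tendsto (fun j => 6 * (1 / 2 : ℝ) ^ j) Filter.atTop (nhds 0) := by
    simpa using (tendsto_pow_atTop_nhds_zero_of_lt_one (r := (1 / 2 : ℝ)) (by norm_num)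
      (by norm_num)).const_mul 6
  obtain ⟨j, ⟨X, hX⟩, hj⟩ := ((U.exists_rank_sub_lt x (ε / 2) (by positivity)).and_eventually
    (hzero.eventually_lt_const (show 0 < ε / 2 by positivity))).exists
  let κ := U.exponent j
  let E := unitSum β (fun s t : Fin (2 ^ κ) => U.unit j s t) X
  let L := unitSum β (fun s t : Fin (2 ^ κ) => G κ s t) X
  have hEL : N (E - L) ≤ 6 * (1 / 2) ^ j := by
    calc N (E - L) = N (∑ s : Fin (2 ^ κ), ∑ t : Fin (2 ^ κ),
          β (X s t) * (U.unit j s t - G κ s t)) := by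
          simp only [E, L, unitSum_apply, mul_sub, Finset.sum_sub_distrib]
      _ ≤ ∑ _s : Fin (2 ^ κ), ∑ _t : Fin (2 ^ κ), 6 * (1 / 4) ^ κ * (1 / 2) ^ j :=
          (hN.sum_le _ _).trans <| Finset.sum_le_sum fun s _ => (hN.sum_le _ _).trans <|
            Finset.sum_le_sum fun t _ => (hN.mul_le_right _ _).trans (hG j s t)
      _ = 6 * (1 / 2) ^ j := by
          have hpow : (2 : ℝ) ^ κ * 2 ^ κ * (1 / 4) ^ κ = 1 := by
            rw [← mul_pow, ← mul_pow]; norm_num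
          simp only [Finset.sum_const, Finset.card_univ, Fintype.card_fin, nsmul_eq_mul,
            Nat.cast_pow, Nat.cast_ofNat]
          linear_combination 6 * (1 / 2) ^ j * hpow
  exact ⟨κ, X, by linarith [hN.sub_le_sub_add_sub x E L]⟩

end Limit

theorem isMD {D Q : Type} [DivisionRing D] [Ring Q] {β : D →+* Q} {N : Q → ℝ}
    (U : ApproxDyadicUnits β N) (hN : IsRankFunction N) (hcomplete : RankComplete N) :
    IsMD D Q β N := by
  let := hN.normedAddCommGroup
  have := hN.continuousMul
  obtain ⟨G, hG⟩ := U.exists_tendsto_coarse hN hcomplete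
  refine isMD_of_matrixUnits hN hcomplete (G := G) (fun κ => ?_) (fun κ => ?_)
    (fun κ d s t => ?_) (fun κ s t => ?_) fun x ε hε => ?_
  · exact IsMatrixUnits.of_tendsto
      ((U.eventually_le_exponent κ).mono fun j => U.isMatrixUnits_coarse) fun s t => (hG κ s t).1
  · exact U.sum_eq_one_of_tendsto_coarse hN fun s => (hG κ s s).1
  · refine tendsto_nhds_unique ((hG κ s t).1.const_mul (β d)) ?_
    simpa only [(U.commute_coarse d κ _ s t).eq] using (hG κ s t).1.mul_const (β d)
  · refine tendsto_nhds_unique_of_eventuallyEq (hG κ s t).1 (tendsto_finsetSum _ fun r _ =>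
      (hG (κ + 1) (blockEquiv (2 ^ κ) 2 (s, r)) (blockEquiv (2 ^ κ) 2 (t, r))).1)
      ((U.eventually_le_exponent (κ + 1)).mono fun j hj => U.coarse_eq_blockSum hj s t)
  · refine U.exists_rank_sub_unitSum_lt hN.1 (fun j s t => ?_) x hε
    simpa only [coarse_exponent] using (hG (U.exponent j) s t).2 j le_rfl

end ApproxDyadicUnits

/-! ### Ultramatricial rings with continuous factor completion -/

section Completion

variable {A Q : Type*} [Ring A] [Ring Q] {N : A → ℝ} {NQ : Q → ℝ} {φ : A →+* Q}

lemma IsContinuousFactor.exists_rank_lt_of_rankDense (hQ : IsContinuousFactor Q)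
    (hNQ : IsRankFunction NQ) (hφ : ∀ a, NQ (φ a) = N a) (hdense : RankDense NQ (Set.range φ))
    {c : ℝ} (hc : 0 < c) : ∃ a, 0 < N a ∧ N a < c := by
  obtain ⟨q, hq0, hqc⟩ := hQ.exists_rank_lt hNQ (half_pos hc)
  obtain ⟨_, ⟨a, rfl⟩, ha⟩ := hdense q (NQ q) hq0
  have hclose := hφ a ▸ abs_le.1 (hNQ.1.abs_sub_le q (φ a))
  exact ⟨a, by linarith [hclose.2], by linarith [hclose.1]⟩

end Completion

theorem statement6_general (D : Type) [DivisionRing D] (A : Type) [Ring A] (ι : D →+* A)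
    (hA : IsUltramatricialDRing D A ι) (N : A → ℝ) (hNext : IsExtremalPseudoRankFunction N)
    (hsmall : ∀ c > 0, ∃ a, 0 < N a ∧ N a < c)
    (Q : Type) [Ring Q] (NQ : Q → ℝ) (φ : A →+* Q)
    (hNQ : IsRankFunction NQ) (hcomplete : RankComplete NQ)
    (hrank_eq : ∀ a : A, NQ (φ a) = N a) (hdense : RankDense NQ (Set.range φ)) :
    IsMD D Q (φ.comp ι) NQ := by
  obtain ⟨T⟩ := hA.nonempty_matricialTower
  have hT : T.AsymptoticallyIndependent N := .of_isExtremal hNext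
  obtain ⟨U⟩ := hT.nonempty_approxDyadicUnits hsmall hNQ.1 hrank_eq hdense
  exact U.isMD hNQ hcomplete

/-- **Theorem 3.2** (Ara–Claramunt). If `A` is an ultramatricial `D`-ring and `N` is an extremal
pseudo-rank function on `A` whose completion `Q` is a continuous factor, then `Q ≅ M_D` as
`D`-rings. -/
theorem statement6 (D : Type) [DivisionRing D] (A : Type) [Ring A] (ι : D →+* A)
    (hA : IsUltramatricialDRing D A ι)
    (N : A → ℝ) (hN : IsPseudoRankFunction N) (hNext : IsExtremalPseudoRankFunction N)
    (Q : Type) [Ring Q] (NQ : Q → ℝ) (φ : A →+* Q)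
    (hNQ : IsRankFunction NQ) (hcomplete : RankComplete NQ)
    (hrank_eq : ∀ a : A, NQ (φ a) = N a) (hdense : RankDense NQ (Set.range φ))
    (hfactor : IsContinuousFactor Q) :
    IsMD D Q (φ.comp ι) NQ :=
  statement6_general D A ι hA N hNext
    (fun _ hc => hfactor.exists_rank_lt_of_rankDense hNQ hrank_eq hdense hc)
    Q NQ φ hNQ hcomplete hrank_eq hdense

end AraClaramunt
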